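/- arXiv:1404.1506 — 9 statements merged into one kernel-verified Lean document; each statement's English description precedes it below -/
import Mathlib

section
/- Let A ∈ ℝ^{m×N} satisfy the null space property of order k (NSP_k), with k ≤ N. Let x ∈ ℝ^N be k-sparse and set y = Ax. Then for every z ∈ ℝ^N satisfying Az = y one has ‖z‖₁ ≥ ‖x‖₁, and equality holds if and only if z = x. In particular, x is the unique minimizer of ‖z‖₁ over all z with Az = y. -/
/-! Let `S` be a set of exactly `k` indices containing the support of `x`; it exists because
`k ≤ N`. If `z ≠ x` has the same image as `x`, then `w = z - x` is a nonzero kernel vector that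
agrees with `z` off `S`, so
`‖x‖₁ = ‖x_S‖₁ ≤ ‖z_S‖₁ + ‖w_S‖₁ < ‖z_S‖₁ + ‖w_{Sᶜ}‖₁ = ‖z‖₁`. -/

open Matrix Finset

/-- A vector `x ∈ ℝ^N` is `k`-sparse if it has at most `k` nonzero entries. -/
def SparseVec {N : ℕ} (k : ℕ) (x : Fin N → ℝ) : Prop :=
  (Finset.univ.filter fun i => x i ≠ 0).card ≤ k

/-- `A` satisfies the null space property of order `k`. -/
def NSP {m N : ℕ} (k : ℕ) (A : Matrix (Fin m) (Fin N) ℝ) : Prop :=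
  ∀ w : Fin N → ℝ, w ≠ 0 → A.mulVec w = 0 →
    ∀ S : Finset (Fin N), S.card = k →
      ∑ i ∈ S, |w i| < ∑ i ∈ Sᶜ, |w i|

theorem stmt_0 {m N k : ℕ} (hk : k ≤ N) (A : Matrix (Fin m) (Fin N) ℝ)
    (hA : NSP k A) (x : Fin N → ℝ) (hx : SparseVec k x)
    (y : Fin m → ℝ) (hy : y = A.mulVec x) :
    ∀ z : Fin N → ℝ, A.mulVec z = y →
      (∑ i, |x i|) ≤ (∑ i, |z i|) ∧ ((∑ i, |z i|) = (∑ i, |x i|) ↔ z = x) := by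
  intro z hz
  -- Strict inequality off `x` gives both conclusions.
  have key : z ≠ x → ∑ i, |x i| < ∑ i, |z i| := by
    intro hne
    obtain ⟨S, hsub, hS⟩ := Finset.exists_superset_card_eq (s := Finset.univ.filter fun i => x i ≠ 0)
      hx (by simpa using hk)
    have hw : A.mulVec (z - x) = 0 := by rw [Matrix.mulVec_sub, hz, hy, sub_self]
    have h := hA (z - x) (sub_ne_zero.mpr hne) hw S hS
    have hx0 : ∀ i ∈ Sᶜ, x i = 0 := by
      intro i hi
      by_contra hxi
      exact (Finset.mem_compl.mp hi) (hsub (by simpa using hxi))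
    have h1 : ∑ i ∈ S, |x i| ≤ ∑ i ∈ S, |z i| + ∑ i ∈ S, |(z - x) i| := by
      rw [← Finset.sum_add_distrib]
      refine Finset.sum_le_sum fun i _ => ?_
      have := abs_sub (z i) (z i - x i)
      simpa using this
    have h2 : ∑ i ∈ Sᶜ, |(z - x) i| = ∑ i ∈ Sᶜ, |z i| :=
      Finset.sum_congr rfl fun i hi => by simp [hx0 i hi]
    have h3 : ∑ i ∈ Sᶜ, |x i| = 0 :=
      Finset.sum_eq_zero fun i hi => by simp [hx0 i hi]
    rw [← Finset.sum_add_sum_compl S (fun i => |x i|),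
      ← Finset.sum_add_sum_compl S (fun i => |z i|)]
    linarith
  by_cases hzx : z = x
  · simp [hzx]
  · exact ⟨(key hzx).le, fun h => absurd h (key hzx).ne', fun h => absurd h hzx⟩
end

section
/- Let X ∈ ℝ^{N₁×N₂} be k-sparse with rank(X) = r, and let U₁ ∈ ℝ^{m₁×N₁}, U₂ ∈ ℝ^{m₂×N₂} satisfy the null space property of order k (NSP_k), with k ≤ N₁ and k ≤ N₂. Let X = Σ_{i=1}^r z_i u_iᵀ be a rank decomposition of X (i.e., z₁,…,z_r and u₁,…,u_r are each linearly independent families). Then U₁z₁,…,U₁z_r are linearly independent, U₂u₁,…,U₂u_r are linearly independent, and Y := U₁XU₂ᵀ = Σ_{i=1}^r (U₁z_i)(U₂u_i)ᵀ is a rank decomposition of Y; in particular rank(U₁XU₂ᵀ) = rank(X). -/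
/-!
If row `p` of `X = ∑ᵢ zᵢ uᵢᵀ` vanishes, then `∑ᵢ zᵢ(p) uᵢ = 0`, so independence of the `uᵢ` forces
`zᵢ(p) = 0` for all `i`. Hence every vector in the span of the `zᵢ` is supported on the nonzero
rows of `X`, of which there are at most `k`. The null space property forbids nonzero `k`-sparse
vectors in the kernel of `U₁`, so `U₁` is injective on this span (`linearIndependent_mulVec`). The
claim for `U₂` is the same statement for `Xᵀ`. Finally `U₁ X U₂ᵀ` is a sum of `r` dyads formed from
two independent families, and any such sum has rank `r` (`rank_sum_vecMulVec`).
-/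

open Matrix Finset

/-- A matrix `X` is `k`-sparse if it has at most `k` nonzero entries in total. -/
def SparseMat {N₁ N₂ : ℕ} (k : ℕ) (X : Matrix (Fin N₁) (Fin N₂) ℝ) : Prop :=
  (Finset.univ.filter fun p : Fin N₁ × Fin N₂ => X p.1 p.2 ≠ 0).card ≤ k

/-- The null space property of order `k` excludes nonzero `k`-sparse kernel vectors: enlarging the
support to a set of exactly `k` indices (possible as `k ≤ N`) leaves no mass on its complement. -/
theorem NSP.eq_zero_of_sparse {m N k : ℕ} (hk : k ≤ N) {A : Matrix (Fin m) (Fin N) ℝ}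
    (hA : NSP k A) {w : Fin N → ℝ} {R : Finset (Fin N)} (hR : R.card ≤ k)
    (hw : ∀ p ∉ R, w p = 0) (hAw : A.mulVec w = 0) : w = 0 := by
  by_contra hne
  obtain ⟨S, hRS, hS⟩ := Finset.exists_superset_card_eq hR (by simpa using hk)
  have hlt := hA w hne hAw S hS
  have h0 : ∑ i ∈ Sᶜ, |w i| = 0 := by
    refine Finset.sum_eq_zero fun i hi => ?_
    rw [hw i fun h => Finset.mem_compl.1 hi (hRS h), abs_zero]
  have hnonneg : 0 ≤ ∑ i ∈ S, |w i| := Finset.sum_nonneg fun i _ => abs_nonneg _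
  linarith

theorem linearIndependent_mulVec {m N₁ N₂ k r : ℕ} (hk : k ≤ N₁)
    {X : Matrix (Fin N₁) (Fin N₂) ℝ} (hX : SparseMat k X)
    {U : Matrix (Fin m) (Fin N₁) ℝ} (hU : NSP k U)
    {z : Fin r → Fin N₁ → ℝ} {u : Fin r → Fin N₂ → ℝ}
    (hz : LinearIndependent ℝ z) (hu : LinearIndependent ℝ u)
    (hdec : X = ∑ i, vecMulVec (z i) (u i)) :
    LinearIndependent ℝ (fun i => U.mulVec (z i)) := by
  classical
  -- `R` is the set of nonzero rows of `X`, the projection of the support of `X`.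
  set R : Finset (Fin N₁) :=
    (Finset.univ.filter fun p : Fin N₁ × Fin N₂ => X p.1 p.2 ≠ 0).image Prod.fst with hRdef
  have hR : R.card ≤ k := Finset.card_image_le.trans hX
  have hzR : ∀ p ∉ R, ∀ i, z i p = 0 := by
    intro p hp
    have hrow : ∀ q, X p q = 0 := by
      intro q
      by_contra h
      exact hp (Finset.mem_image.2 ⟨(p, q), by simpa using h, rfl⟩)
    refine Fintype.linearIndependent_iff.1 hu (fun i => z i p) ?_
    ext q
    have h := hrow q
    rw [hdec, Matrix.sum_apply] at h
    simpa [vecMulVec_apply, Finset.sum_apply] using h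
  rw [Fintype.linearIndependent_iff]
  intro c hc
  refine Fintype.linearIndependent_iff.1 hz c ?_
  refine hU.eq_zero_of_sparse hk hR (fun p hp => ?_) ?_
  · simp [Finset.sum_apply, hzR p hp]
  · rw [Matrix.mulVec_sum]
    simpa [Matrix.mulVec_smul] using hc

theorem sum_vecMulVec_eq_mul {m n r : ℕ} (a : Fin r → Fin m → ℝ) (b : Fin r → Fin n → ℝ) :
    ∑ i, vecMulVec (a i) (b i) = (Matrix.of a)ᵀ * Matrix.of b := by
  ext p q
  simp [Matrix.sum_apply, vecMulVec_apply, Matrix.mul_apply]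

theorem rank_sum_vecMulVec {m n r : ℕ} {a : Fin r → Fin m → ℝ} {b : Fin r → Fin n → ℝ}
    (ha : LinearIndependent ℝ a) (hb : LinearIndependent ℝ b) :
    (∑ i, vecMulVec (a i) (b i)).rank = r := by
  have hra : (Matrix.of a).rank = r := by
    simpa using LinearIndependent.rank_matrix (M := Matrix.of a) ha
  have hrb : (Matrix.of b).rank = r := by
    simpa using LinearIndependent.rank_matrix (M := Matrix.of b) hb
  -- The factor with rows `b i` is surjective as a map onto `ℝ^r`, so it does not shrink the range.
  have hsurj : LinearMap.range (Matrix.of b).mulVecLin = ⊤ := by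
    apply Submodule.eq_top_of_finrank_eq
    rw [Module.finrank_fin_fun]
    exact hrb
  rw [sum_vecMulVec_eq_mul, Matrix.rank, Matrix.mulVecLin_mul,
    LinearMap.range_comp_of_range_eq_top _ hsurj]
  exact (Matrix.rank_transpose _).trans hra

theorem stmt_4 {m₁ m₂ N₁ N₂ k r : ℕ} (hk₁ : k ≤ N₁) (hk₂ : k ≤ N₂)
    (X : Matrix (Fin N₁) (Fin N₂) ℝ) (hX : SparseMat k X) (hr : X.rank = r)
    (U₁ : Matrix (Fin m₁) (Fin N₁) ℝ) (U₂ : Matrix (Fin m₂) (Fin N₂) ℝ)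
    (hU₁ : NSP k U₁) (hU₂ : NSP k U₂)
    (z : Fin r → Fin N₁ → ℝ) (u : Fin r → Fin N₂ → ℝ)
    (hz : LinearIndependent ℝ z) (hu : LinearIndependent ℝ u)
    (hdec : X = ∑ i, vecMulVec (z i) (u i)) :
    LinearIndependent ℝ (fun i => U₁.mulVec (z i)) ∧
    LinearIndependent ℝ (fun i => U₂.mulVec (u i)) ∧
    U₁ * X * U₂ᵀ = ∑ i, vecMulVec (U₁.mulVec (z i)) (U₂.mulVec (u i)) ∧
    (U₁ * X * U₂ᵀ).rank = X.rank := by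
  have h₁ := linearIndependent_mulVec hk₁ hX hU₁ hz hu hdec
  have hXt : SparseMat k Xᵀ := by
    unfold SparseMat at hX ⊢
    refine le_trans (le_of_eq ?_) hX
    refine Finset.card_bij (fun p _ => p.swap) ?_ ?_ ?_
    · intro p hp
      exact Finset.mem_filter.2 ⟨Finset.mem_univ _, (Finset.mem_filter.1 hp).2⟩
    · intro p _ q _ h
      exact Prod.swap_injective h
    · intro p hp
      exact ⟨p.swap,
        Finset.mem_filter.2 ⟨Finset.mem_univ _, (Finset.mem_filter.1 hp).2⟩, p.swap_swap⟩
  have hdect : Xᵀ = ∑ i, vecMulVec (u i) (z i) := by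
    rw [hdec, Matrix.transpose_sum]
    simp [Matrix.transpose_vecMulVec]
  have h₂ := linearIndependent_mulVec hk₂ hXt hU₂ hu hz hdect
  have hY : U₁ * X * U₂ᵀ = ∑ i, vecMulVec (U₁.mulVec (z i)) (U₂.mulVec (u i)) := by
    rw [hdec, Matrix.mul_sum, Matrix.sum_mul]
    refine Finset.sum_congr rfl fun i _ => ?_
    rw [Matrix.mul_vecMulVec, Matrix.vecMulVec_mul, Matrix.vecMul_transpose]
  refine ⟨h₁, h₂, hY, ?_⟩
  rw [hY, hr]
  exact rank_sum_vecMulVec h₁ h₂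
end

section
/- (CSM-S, noiseless serial recovery for matrices.) Let X ∈ ℝ^{N₁×N₂} be k-sparse, let U₁ ∈ ℝ^{m₁×N₁} and U₂ ∈ ℝ^{m₂×N₂} satisfy the null space property of order k (NSP_k), with k ≤ N₁ and k ≤ N₂, and set Y = U₁XU₂ᵀ ∈ ℝ^{m₁×m₂} and Z = XU₂ᵀ ∈ ℝ^{N₁×m₂}. Then: (i) for each i ∈ {1,…,m₂}, the i-th column of Z is k-sparse and is the unique minimizer of ‖z‖₁ over all z ∈ ℝ^{N₁} with U₁z equal to the i-th column of Y; (ii) for each j ∈ {1,…,N₁}, the j-th row of X (as a vector in ℝ^{N₂}) is k-sparse and is the unique minimizer of ‖v‖₁ over all v ∈ ℝ^{N₂} with U₂v equal to the j-th row of Z (as a vector in ℝ^{m₂}). -/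
/-!
Both parts are instances of one fact about vectors (`NSP.isUniqueMin`): if `U` satisfies the null
space property of order `k` and `x` is `k`-sparse, then `x` is the unique `ℓ¹`-minimizer among the
solutions of `U z = U x`. Indeed, let `S` have `k` elements and contain the support of `x`. For
another solution `z`, the difference `w = z - x` is a nonzero kernel vector, so
`‖x‖₁ = ‖x_S‖₁ ≤ ‖z_S‖₁ + ‖w_S‖₁ < ‖z_S‖₁ + ‖w_{Sᶜ}‖₁ = ‖z‖₁`.

It remains to see that the vectors concerned are `k`-sparse. A nonzero entry in row `r` of
`Z = X U₂ᵀ` forces row `r` of `X` to be nonzero, and `X` has at most `k` nonzero rows; a row of `X`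
has at most as many nonzero entries as `X`.
-/

open Matrix Finset

/-- `x` is the unique minimizer of the `ℓ¹` norm subject to `U z = y`. -/
def IsUniqueMin {m N : ℕ} (U : Matrix (Fin m) (Fin N) ℝ) (y : Fin m → ℝ)
    (x : Fin N → ℝ) : Prop :=
  U.mulVec x = y ∧ ∀ z : Fin N → ℝ, U.mulVec z = y →
    (∑ i, |x i|) ≤ (∑ i, |z i|) ∧ ((∑ i, |z i|) = (∑ i, |x i|) → z = x)

theorem NSP.isUniqueMin {m N k : ℕ} (hk : k ≤ N) {U : Matrix (Fin m) (Fin N) ℝ} (hU : NSP k U)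
    {x : Fin N → ℝ} (hx : SparseVec k x) : IsUniqueMin U (U.mulVec x) x := by
  have key : ∀ z : Fin N → ℝ, U.mulVec z = U.mulVec x → z ≠ x → ∑ i, |x i| < ∑ i, |z i| := by
    intro z hz hne
    -- The null space property speaks of sets with exactly `k` elements, so the support of `x` is
    -- enlarged to such a set; this uses `k ≤ N`.
    obtain ⟨S, hsub, hcard⟩ := Finset.exists_superset_card_eq hx (by simpa using hk)
    have h0 : ∀ i ∈ Sᶜ, x i = 0 := by
      intro i hi
      by_contra h
      exact Finset.mem_compl.1 hi (hsub (by simp [h]))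
    have hw := hU (z - x) (sub_ne_zero.2 hne) (by rw [Matrix.mulVec_sub, hz, sub_self]) S hcard
    have hwc : ∑ i ∈ Sᶜ, |(z - x) i| = ∑ i ∈ Sᶜ, |z i| :=
      Finset.sum_congr rfl fun i hi => by simp [h0 i hi]
    have hxc : ∑ i ∈ Sᶜ, |x i| = 0 :=
      Finset.sum_eq_zero fun i hi => by simp [h0 i hi]
    have hxs : ∑ i ∈ S, |x i| ≤ ∑ i ∈ S, |z i| + ∑ i ∈ S, |(z - x) i| := by
      rw [← Finset.sum_add_distrib]
      refine Finset.sum_le_sum fun i _ => ?_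
      have h := abs_sub (z i) (z i - x i)
      rwa [sub_sub_cancel] at h
    rw [← Finset.sum_add_sum_compl S fun i => |x i|, ← Finset.sum_add_sum_compl S fun i => |z i|]
    linarith
  refine ⟨rfl, fun z hz => ⟨?_, fun h => ?_⟩⟩
  · by_cases hne : z = x
    · rw [hne]
    · exact (key z hz hne).le
  · by_contra hne
    exact (key z hz hne).ne' h

theorem SparseMat.row {N₁ N₂ k : ℕ} {X : Matrix (Fin N₁) (Fin N₂) ℝ} (hX : SparseMat k X)
    (j : Fin N₁) : SparseVec k (X j) := by
  refine le_trans (Finset.card_le_card_of_injOn (fun c => (j, c)) ?_ ?_) hX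
  · intro c hc
    simpa using hc
  · intro a _ b _ h
    exact (Prod.mk.inj h).2

/-- Right multiplication creates no new nonzero rows, so every column of `X * B` is supported on
the at most `k` nonzero rows of `X`. -/
theorem SparseMat.mul_col {N₁ N₂ m k : ℕ} {X : Matrix (Fin N₁) (Fin N₂) ℝ} (hX : SparseMat k X)
    (B : Matrix (Fin N₂) (Fin m) ℝ) (i : Fin m) : SparseVec k (fun r => (X * B) r i) := by
  refine le_trans (le_trans (Finset.card_le_card ?_) (Finset.card_image_le (f := Prod.fst))) hX
  intro r hr
  have hr' : ∑ c, X r c * B c i ≠ 0 := (Finset.mem_filter.1 hr).2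
  obtain ⟨c, -, hc⟩ := Finset.exists_ne_zero_of_sum_ne_zero hr'
  exact Finset.mem_image.2 ⟨(r, c), by simpa using left_ne_zero_of_mul hc, rfl⟩

theorem stmt_5 {m₁ m₂ N₁ N₂ k : ℕ} (hk₁ : k ≤ N₁) (hk₂ : k ≤ N₂)
    (X : Matrix (Fin N₁) (Fin N₂) ℝ) (hX : SparseMat k X)
    (U₁ : Matrix (Fin m₁) (Fin N₁) ℝ) (U₂ : Matrix (Fin m₂) (Fin N₂) ℝ)
    (hU₁ : NSP k U₁) (hU₂ : NSP k U₂)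
    (Y : Matrix (Fin m₁) (Fin m₂) ℝ) (hY : Y = U₁ * X * U₂ᵀ)
    (Z : Matrix (Fin N₁) (Fin m₂) ℝ) (hZ : Z = X * U₂ᵀ) :
    (∀ i : Fin m₂, SparseVec k (fun r => Z r i) ∧
      IsUniqueMin U₁ (fun p => Y p i) (fun r => Z r i)) ∧
    (∀ j : Fin N₁, SparseVec k (X j) ∧
      IsUniqueMin U₂ (Z j) (X j)) := by
  subst hY hZ
  refine ⟨fun i => ⟨hX.mul_col _ i, ?_⟩, fun j => ⟨hX.row j, ?_⟩⟩
  · have h : (fun p => (U₁ * X * U₂ᵀ) p i) = U₁.mulVec (fun r => (X * U₂ᵀ) r i) := by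
      rw [Matrix.mul_assoc]
      rfl
    rw [h]
    exact hU₁.isUniqueMin hk₁ (hX.mul_col _ i)
  · have h : (X * U₂ᵀ) j = U₂.mulVec (X j) := by
      ext c
      simp [Matrix.mul_apply, Matrix.mulVec, dotProduct, mul_comm]
    rw [h]
    exact hU₂.isUniqueMin hk₂ (hX.row j)
end

section
/- (CSM-P, noiseless parallelizable recovery for matrices.) Let X ∈ ℝ^{N₁×N₂} be k-sparse, let U₁ ∈ ℝ^{m₁×N₁} and U₂ ∈ ℝ^{m₂×N₂} satisfy the null space property of order k (NSP_k), with k ≤ N₁ and k ≤ N₂, and set Y = U₁XU₂ᵀ. Let Y = Σ_{i=1}^K b_i^{(1)} (b_i^{(2)})ᵀ be any rank decomposition of Y, where K = rank(Y). Then for each i ∈ {1,…,K} and j ∈ {1,2} there exists a unique k-sparse vector ŵ_i^{(j)} ∈ ℝ^{N_j} with U_j ŵ_i^{(j)} = b_i^{(j)}; moreover ŵ_i^{(1)} lies in the column space of X, ŵ_i^{(2)} lies in the column space of Xᵀ, and X = Σ_{i=1}^K ŵ_i^{(1)} (ŵ_i^{(2)})ᵀ. -/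
/-!
All columns of a `k`-sparse matrix `X` are supported on the at most `k` rows of `X` that are nonzero,
so every vector of `colSpan X` is `k`-sparse (`sparseVec_of_mem_colSpan`), and the null space property
makes `U₁` injective on `k`-sparse vectors (`NSP.eq_of_sparse`), in particular on `colSpan X`.

Since the `b₂ i` are linearly independent, they have a dual family `c i`. Applying `Y = U₁ X U₂ᵀ` to
`c i` gives `b₁ i = U₁ (X U₂ᵀ c i)`, so `X U₂ᵀ c i` is the required preimage of `b₁ i`, and it lies in
`colSpan X` (`exists_sparse_preimages`). The preimages of the `b₂ i` come from the transposed problem.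

Finally `Z = X - ∑ i, w₁ i (w₂ i)ᵀ` satisfies `U₁ Z U₂ᵀ = 0`. The columns of `Z U₂ᵀ` lie in `colSpan X`
and the rows of `Z` in `colSpan Xᵀ`, so the two injectivity statements give `Z U₂ᵀ = 0` and `Z = 0`.
-/

open Matrix Finset

/-- The column space of a matrix `X`, i.e. the span of its columns. -/
def colSpan {N₁ N₂ : ℕ} (X : Matrix (Fin N₁) (Fin N₂) ℝ) : Submodule ℝ (Fin N₁ → ℝ) :=
  Submodule.span ℝ (Set.range fun j => fun i => X i j)

/-- The null space property of order `k` makes `A` injective on `k`-sparse vectors. -/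
theorem NSP.eq_of_sparse {m N k : ℕ} (hk : k ≤ N) {A : Matrix (Fin m) (Fin N) ℝ} (hA : NSP k A)
    {v w : Fin N → ℝ} (hv : SparseVec k v) (hw : SparseVec k w)
    (h : A.mulVec v = A.mulVec w) : v = w := by
  by_contra hne
  obtain ⟨S, hS, hSk⟩ := Finset.exists_superset_card_eq hv (by simpa using hk)
  obtain ⟨T, hT, hTk⟩ := Finset.exists_superset_card_eq hw (by simpa using hk)
  have hz : v - w ≠ 0 := sub_ne_zero.mpr hne
  have hAz : A.mulVec (v - w) = 0 := by rw [Matrix.mulVec_sub, h, sub_self]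
  have h1 := hA _ hz hAz S hSk
  have h2 := hA _ hz hAz T hTk
  have hvS : ∀ i, i ∉ S → v i = 0 := fun i hi => by
    by_contra h0
    exact hi (hS (by simpa using h0))
  have hwT : ∀ i, i ∉ T → w i = 0 := fun i hi => by
    by_contra h0
    exact hi (hT (by simpa using h0))
  -- `v - w` vanishes off `S ∪ T`, so its mass off `S` is at most its mass on `T`, and conversely;
  -- this contradicts the null space inequalities for `S` and `T`.
  have key : ∀ P Q : Finset (Fin N), (∀ i, i ∉ P → i ∉ Q → (v - w) i = 0) →
      ∑ i ∈ Pᶜ, |(v - w) i| ≤ ∑ i ∈ Q, |(v - w) i| := by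
    intro P Q hPQ
    calc ∑ i ∈ Pᶜ, |(v - w) i| = ∑ i ∈ Pᶜ ∩ Q, |(v - w) i| := by
          symm
          apply Finset.sum_subset Finset.inter_subset_left
          intro i hi hi'
          have hP : i ∉ P := by simpa using hi
          have hQ : i ∉ Q := fun hq => hi' (Finset.mem_inter.mpr ⟨hi, hq⟩)
          rw [hPQ i hP hQ, abs_zero]
      _ ≤ _ := Finset.sum_le_sum_of_subset_of_nonneg Finset.inter_subset_right
          fun _ _ _ => abs_nonneg _
  have h3 := key S T fun i hs ht => by simp [hvS i hs, hwT i ht]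
  have h4 := key T S fun i ht hs => by simp [hvS i hs, hwT i ht]
  linarith

theorem SparseMat.transpose {N₁ N₂ k : ℕ} {X : Matrix (Fin N₁) (Fin N₂) ℝ} (hX : SparseMat k X) :
    SparseMat k Xᵀ := by
  refine le_trans (Finset.card_le_card_of_injOn Prod.swap ?_ Prod.swap_injective.injOn) hX
  intro p hp
  simp only [Finset.coe_filter, Finset.mem_univ, true_and, Set.mem_ofPred_eq] at hp ⊢
  exact hp

theorem sparseVec_zero {N : ℕ} (k : ℕ) : SparseVec k (0 : Fin N → ℝ) := by
  simp [SparseVec]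

theorem mulVec_mem_colSpan {N₁ N₂ : ℕ} (X : Matrix (Fin N₁) (Fin N₂) ℝ) (c : Fin N₂ → ℝ) :
    X.mulVec c ∈ colSpan X := by
  have hcomb : X.mulVec c = ∑ j, c j • fun i => X i j := by
    ext i
    simp [Matrix.mulVec, dotProduct, mul_comm]
  rw [hcomb]
  refine Submodule.sum_mem _ fun j _ => ?_
  exact Submodule.smul_mem _ _ (Submodule.subset_span ⟨j, rfl⟩)

theorem sparseVec_of_mem_colSpan {N₁ N₂ k : ℕ} {X : Matrix (Fin N₁) (Fin N₂) ℝ}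
    (hX : SparseMat k X) {v : Fin N₁ → ℝ} (hv : v ∈ colSpan X) : SparseVec k v := by
  have hrow : ∀ i, (∀ j, X i j = 0) → v i = 0 := by
    intro i hi
    induction hv using Submodule.span_induction with
    | mem x hx => obtain ⟨j, rfl⟩ := hx; exact hi j
    | zero => rfl
    | add x y _ _ hx hy => simp [hx, hy]
    | smul a x _ hx => simp [hx]
  -- the support of `v` is contained in the projection of the support of `X` to the rows
  refine le_trans (Finset.card_le_card ?_) (le_trans (Finset.card_image_le (f := Prod.fst)) hX)
  intro i hi
  have hi' : v i ≠ 0 := by simpa using hi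
  obtain ⟨j, hj⟩ : ∃ j, X i j ≠ 0 := by
    by_contra! h0
    exact hi' (hrow i h0)
  exact Finset.mem_image.mpr ⟨(i, j), by simpa using hj, rfl⟩

/-- A linearly independent family in `ℝ^m` has a dual family for the dot product. -/
theorem exists_dual_family {m K : ℕ} {b : Fin K → Fin m → ℝ} (hb : LinearIndependent ℝ b) :
    ∃ c : Fin K → Fin m → ℝ, ∀ l i, b l ⬝ᵥ c i = if l = i then 1 else 0 := by
  have hrank : (Matrix.of b).rank = K := by
    simpa using LinearIndependent.rank_matrix (M := Matrix.of b) hb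
  have htop : LinearMap.range (Matrix.of b).mulVecLin = ⊤ := by
    apply Submodule.eq_top_of_finrank_eq
    rw [← Matrix.rank, hrank]
    simp
  have hsurj := LinearMap.range_eq_top.mp htop
  choose c hc using fun i : Fin K => hsurj (Pi.single i 1)
  refine ⟨c, fun l i => ?_⟩
  have := congrFun (hc i) l
  rw [Pi.single_apply] at this
  exact this

theorem exists_sparse_preimages {m₁ m₂ N₁ N₂ k K : ℕ} (hk₁ : k ≤ N₁)
    (X : Matrix (Fin N₁) (Fin N₂) ℝ) (hX : SparseMat k X)
    (U₁ : Matrix (Fin m₁) (Fin N₁) ℝ) (U₂ : Matrix (Fin m₂) (Fin N₂) ℝ) (hU₁ : NSP k U₁)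
    (b₁ : Fin K → Fin m₁ → ℝ) (b₂ : Fin K → Fin m₂ → ℝ) (hb₂ : LinearIndependent ℝ b₂)
    (hdec : U₁ * X * U₂ᵀ = ∑ i, vecMulVec (b₁ i) (b₂ i)) :
    ∃ w₁ : Fin K → Fin N₁ → ℝ,
      ∀ i, SparseVec k (w₁ i) ∧ U₁.mulVec (w₁ i) = b₁ i ∧ w₁ i ∈ colSpan X ∧
        ∀ v : Fin N₁ → ℝ, SparseVec k v → U₁.mulVec v = b₁ i → v = w₁ i := by
  obtain ⟨c, hc⟩ := exists_dual_family hb₂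
  refine ⟨fun i => X.mulVec (U₂ᵀ.mulVec (c i)), fun i => ?_⟩
  have hmem := mulVec_mem_colSpan X (U₂ᵀ.mulVec (c i))
  have hsp := sparseVec_of_mem_colSpan hX hmem
  have hU : U₁.mulVec (X.mulVec (U₂ᵀ.mulVec (c i))) = b₁ i := by
    rw [Matrix.mulVec_mulVec, Matrix.mulVec_mulVec, hdec, Matrix.sum_mulVec]
    simp [Matrix.vecMulVec_mulVec, hc]
  exact ⟨hsp, hU, hmem, fun v hv hv' => hU₁.eq_of_sparse hk₁ hv hsp (hv'.trans hU.symm)⟩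

/-- If all columns of `Z` lie in the column space of a `k`-sparse matrix, a matrix with the null space
property of order `k` can be cancelled from `A * Z = 0`. -/
theorem NSP.eq_zero_of_mul_eq_zero {m N₁ N₂ n k : ℕ} (hk : k ≤ N₁)
    {X : Matrix (Fin N₁) (Fin N₂) ℝ} (hX : SparseMat k X) {A : Matrix (Fin m) (Fin N₁) ℝ}
    (hA : NSP k A) {Z : Matrix (Fin N₁) (Fin n) ℝ} (hZ : ∀ j, Z.col j ∈ colSpan X)
    (h : A * Z = 0) : Z = 0 := by
  ext i j
  have hcol : A.mulVec (Z.col j) = A.mulVec 0 := by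
    rw [Matrix.mulVec_zero]
    ext a
    exact congrFun (congrFun h a) j
  exact congrFun
    (hA.eq_of_sparse hk (sparseVec_of_mem_colSpan hX (hZ j)) (sparseVec_zero k) hcol) i

/-- Subtracting from `X` rank-one matrices with left factors in `colSpan X` leaves the columns in
`colSpan X`. -/
theorem col_sub_sum_mem_colSpan {N₁ N₂ K : ℕ} (X : Matrix (Fin N₁) (Fin N₂) ℝ)
    (w₁ : Fin K → Fin N₁ → ℝ) (w₂ : Fin K → Fin N₂ → ℝ) (hw : ∀ i, w₁ i ∈ colSpan X)
    (j : Fin N₂) : (X - ∑ i, vecMulVec (w₁ i) (w₂ i)).col j ∈ colSpan X := by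
  have : (X - ∑ i, vecMulVec (w₁ i) (w₂ i)).col j = (fun i => X i j) - ∑ i, w₂ i j • w₁ i := by
    ext a
    simp [Matrix.sum_apply, Matrix.vecMulVec_apply, mul_comm]
  rw [this]
  exact Submodule.sub_mem _ (Submodule.subset_span ⟨j, rfl⟩)
    (Submodule.sum_mem _ fun i _ => Submodule.smul_mem _ _ (hw i))

theorem stmt_6 {m₁ m₂ N₁ N₂ k K : ℕ} (hk₁ : k ≤ N₁) (hk₂ : k ≤ N₂)
    (X : Matrix (Fin N₁) (Fin N₂) ℝ) (hX : SparseMat k X)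
    (U₁ : Matrix (Fin m₁) (Fin N₁) ℝ) (U₂ : Matrix (Fin m₂) (Fin N₂) ℝ)
    (hU₁ : NSP k U₁) (hU₂ : NSP k U₂)
    (hK : (U₁ * X * U₂ᵀ).rank = K)
    (b₁ : Fin K → Fin m₁ → ℝ) (b₂ : Fin K → Fin m₂ → ℝ)
    (hb₁ : LinearIndependent ℝ b₁) (hb₂ : LinearIndependent ℝ b₂)
    (hdec : U₁ * X * U₂ᵀ = ∑ i, vecMulVec (b₁ i) (b₂ i)) :
    ∃ (w₁ : Fin K → Fin N₁ → ℝ) (w₂ : Fin K → Fin N₂ → ℝ),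
      (∀ i, SparseVec k (w₁ i) ∧ U₁.mulVec (w₁ i) = b₁ i ∧ w₁ i ∈ colSpan X ∧
        ∀ v : Fin N₁ → ℝ, SparseVec k v → U₁.mulVec v = b₁ i → v = w₁ i) ∧
      (∀ i, SparseVec k (w₂ i) ∧ U₂.mulVec (w₂ i) = b₂ i ∧ w₂ i ∈ colSpan Xᵀ ∧
        ∀ v : Fin N₂ → ℝ, SparseVec k v → U₂.mulVec v = b₂ i → v = w₂ i) ∧
      X = ∑ i, vecMulVec (w₁ i) (w₂ i) := by
  obtain ⟨w₁, hw₁⟩ := exists_sparse_preimages hk₁ X hX U₁ U₂ hU₁ b₁ b₂ hb₂ hdec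
  have hdecT : U₂ * Xᵀ * U₁ᵀ = ∑ i, vecMulVec (b₂ i) (b₁ i) := by
    have := congrArg Matrix.transpose hdec
    simpa [Matrix.transpose_mul, Matrix.transpose_sum, Matrix.transpose_vecMulVec,
      Matrix.mul_assoc] using this
  obtain ⟨w₂, hw₂⟩ :=
    exists_sparse_preimages hk₂ Xᵀ hX.transpose U₂ U₁ hU₂ b₂ b₁ hb₁ hdecT
  refine ⟨w₁, w₂, hw₁, hw₂, ?_⟩
  set Z := X - ∑ i, vecMulVec (w₁ i) (w₂ i) with hZ
  have hcols : ∀ j, Z.col j ∈ colSpan X :=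
    col_sub_sum_mem_colSpan X w₁ w₂ fun i => (hw₁ i).2.2.1
  have hZT : Zᵀ = Xᵀ - ∑ i, vecMulVec (w₂ i) (w₁ i) := by
    simp [hZ, Matrix.transpose_sum, Matrix.transpose_vecMulVec]
  have hrows : ∀ j, Zᵀ.col j ∈ colSpan Xᵀ := by
    rw [hZT]
    exact col_sub_sum_mem_colSpan Xᵀ w₂ w₁ fun i => (hw₂ i).2.2.1
  have hUZU : U₁ * (Z * U₂ᵀ) = 0 := by
    rw [← Matrix.mul_assoc, hZ, Matrix.mul_sub, Matrix.sub_mul, hdec, sub_eq_zero,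
      Matrix.mul_sum, Matrix.sum_mul]
    refine Finset.sum_congr rfl fun i _ => ?_
    rw [Matrix.mul_vecMulVec, Matrix.vecMulVec_mul, Matrix.vecMul_transpose,
      (hw₁ i).2.1, (hw₂ i).2.1]
  have hZU : Z * U₂ᵀ = 0 := by
    refine hU₁.eq_zero_of_mul_eq_zero hk₁ hX (fun a => ?_) hUZU
    have : (Z * U₂ᵀ).col a = ∑ j, U₂ a j • Z.col j := by
      ext i
      simp [Matrix.mul_apply, mul_comm]
    rw [this]
    exact Submodule.sum_mem _ fun j _ => Submodule.smul_mem _ _ (hcols j)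
  have hUZT : U₂ * Zᵀ = 0 := by
    simpa [Matrix.transpose_mul] using congrArg Matrix.transpose hZU
  have hZ0 : Zᵀ = 0 := hU₂.eq_zero_of_mul_eq_zero hk₂ hX.transpose hrows hUZT
  exact sub_eq_zero.mp (Matrix.transpose_eq_zero.mp hZ0)
end

section
/- Let A ∈ ℝ^{m×N} satisfy the restricted isometry property of order 2k (RIP_{2k}) with constant δ_{2k} ∈ (0, √2 − 1). Let x ∈ ℝ^N be k-sparse and let y = Ax + e with ‖e‖₂ ≤ ε for some ε ≥ 0. Then every minimizer x̂ of ‖z‖₁ over all z ∈ ℝ^N with ‖Az − y‖₂ ≤ ε satisfies ‖x̂ − x‖₂ ≤ C₂ε, where C₂ = 4√(1+δ_{2k}) / (1 − (1+√2)δ_{2k}). -/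
/-!
The argument is Candès's. Put `h = xhat - x` and let `T₀` be the support of `x`. Minimality of
`‖xhat‖₁` puts `h` in the cone `‖h_{T₀ᶜ}‖₁ ≤ ‖h_{T₀}‖₁` (`cone_bound`). Sorting `T₀ᶜ` into
blocks `T₁, T₂, …` of size `k` by decreasing `|h i|`, each `‖h_{T_{j+1}}‖₂` is at most
`‖h_{T_j}‖₁ / √k`, hence `∑_{j ≥ 2} ‖h_{T_j}‖₂ ≤ ‖h_{T₀ᶜ}‖₁ / √k ≤ ‖h_{T₀}‖₂`. This is used
twice: it bounds `h` off `T₀ ∪ T₁`, and, with the near-orthogonality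
`-⟨A u, A v⟩ ≤ δ ‖u‖ ‖v‖` for disjointly supported `k`-sparse `u`, `v` (`rip_inner`), it bounds the
cross terms in `‖A h_{T₀ ∪ T₁}‖² = ⟨A h_{T₀ ∪ T₁}, A h⟩ - ∑_{j ≥ 2} ⟨A h_{T₀ ∪ T₁}, A h_{T_j}⟩`.
Together with `‖A h‖ ≤ 2 ε` this gives the estimate.

`block_bound` packages both uses of the sorting, by quantifying over a subadditive function of the
index set, so that the list of blocks never has to be named.
-/

open Matrix Finset

/-- The Euclidean (`ℓ²`) norm of a vector. -/
noncomputable def norm2 {N : ℕ} (x : Fin N → ℝ) : ℝ :=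
  Real.sqrt (∑ i, (x i) ^ 2)

/-- `A` satisfies the restricted isometry property of order `k` with constant `δ`. -/
def RIP {m N : ℕ} (k : ℕ) (δ : ℝ) (A : Matrix (Fin m) (Fin N) ℝ) : Prop :=
  ∀ x : Fin N → ℝ, SparseVec k x →
    (1 - δ) * (∑ i, (x i) ^ 2) ≤ (∑ j, (A.mulVec x j) ^ 2) ∧
    (∑ j, (A.mulVec x j) ^ 2) ≤ (1 + δ) * (∑ i, (x i) ^ 2)

/-! ### Restrictions to coordinate sets -/

/-- The restriction of `h` to the coordinates in `U`, extended by zero. -/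
def restr {N : ℕ} (h : Fin N → ℝ) (U : Finset (Fin N)) : Fin N → ℝ :=
  fun i => if i ∈ U then h i else 0

/-- The Euclidean norm of the restriction of `h` to `U`. -/
noncomputable def nrm {N : ℕ} (h : Fin N → ℝ) (U : Finset (Fin N)) : ℝ :=
  Real.sqrt (∑ i ∈ U, (h i) ^ 2)

lemma nrm_nonneg {N : ℕ} (h : Fin N → ℝ) (U : Finset (Fin N)) : 0 ≤ nrm h U :=
  Real.sqrt_nonneg _

lemma nrm_sq {N : ℕ} (h : Fin N → ℝ) (U : Finset (Fin N)) :
    nrm h U ^ 2 = ∑ i ∈ U, (h i) ^ 2 :=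
  Real.sq_sqrt (Finset.sum_nonneg fun _ _ => sq_nonneg _)

lemma nrm_sq_union {N : ℕ} (h : Fin N → ℝ) {U V : Finset (Fin N)} (hd : Disjoint U V) :
    nrm h (U ∪ V) ^ 2 = nrm h U ^ 2 + nrm h V ^ 2 := by
  simp only [nrm_sq, Finset.sum_union hd]

lemma nrm_union_le {N : ℕ} (h : Fin N → ℝ) {U V : Finset (Fin N)} (hd : Disjoint U V) :
    nrm h (U ∪ V) ≤ nrm h U + nrm h V := by
  have := nrm_sq_union h hd
  have h1 := nrm_nonneg h U
  have h2 := nrm_nonneg h V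
  refine abs_le_of_sq_le_sq' (by nlinarith) (by positivity) |>.2

lemma restr_union {N : ℕ} (h : Fin N → ℝ) {U V : Finset (Fin N)} (hd : Disjoint U V) :
    restr h (U ∪ V) = restr h U + restr h V := by
  funext i
  by_cases hU : i ∈ U
  · have := Finset.disjoint_left.mp hd hU
    simp [restr, hU, this]
  · simp [restr, hU]

lemma norm2_eq {N : ℕ} (v : Fin N → ℝ) :
    norm2 v = ‖(WithLp.toLp 2 v : EuclideanSpace ℝ (Fin N))‖ := by
  simp [norm2, EuclideanSpace.norm_eq]

lemma norm2_add_le {N : ℕ} (v w : Fin N → ℝ) : norm2 (v + w) ≤ norm2 v + norm2 w := by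
  simp only [norm2_eq, WithLp.toLp_add]
  exact norm_add_le _ _

lemma dot_self {N : ℕ} (v : Fin N → ℝ) : ∑ i, (v i) ^ 2 = v ⬝ᵥ v := by
  simp [dotProduct, sq]

lemma dot_le {N : ℕ} (v w : Fin N → ℝ) : v ⬝ᵥ w ≤ norm2 v * norm2 w :=
  Real.sum_mul_le_sqrt_mul_sqrt _ _ _

/-! ### Sorting into blocks -/

lemma exists_top {N : ℕ} (h : Fin N → ℝ) (S : Finset (Fin N)) (k : ℕ) (hk : k ≤ S.card) :
    ∃ T ⊆ S, T.card = k ∧ ∀ i ∈ T, ∀ j ∈ S \ T, |h j| ≤ |h i| := by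
  induction k with
  | zero => exact ⟨∅, by simp, by simp, by simp⟩
  | succ k ih =>
    obtain ⟨T, hTS, hc, hT⟩ := ih (by omega)
    have hne : (S \ T).Nonempty := by
      rw [← Finset.card_pos, Finset.card_sdiff_of_subset hTS]; omega
    obtain ⟨a, ha, hmax⟩ := Finset.exists_max_image (S \ T) (fun i => |h i|) hne
    have ha' := Finset.mem_sdiff.mp ha
    refine ⟨insert a T, Finset.insert_subset ha'.1 hTS, ?_, ?_⟩
    · rw [Finset.card_insert_of_notMem ha'.2, hc]
    · intro i hi j hj
      have hj' : j ∈ S \ T := by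
        simp only [Finset.mem_sdiff, Finset.mem_insert, not_or] at hj ⊢
        exact ⟨hj.1, hj.2.2⟩
      rcases Finset.mem_insert.mp hi with rfl | hi
      · exact hmax j hj'
      · exact hT i hi j hj'

/-- If the `k` entries of `h` on `T` dominate the at most `k` entries on `T'`, then
`‖h_{T'}‖₂ ≤ ‖h_T‖₁ / √k`. -/
lemma nrm_le_of_dominated {N k : ℕ} (hk : 0 < k) (h : Fin N → ℝ) (T T' : Finset (Fin N))
    (hT : T.card = k) (hT' : T'.card ≤ k) (hd : ∀ i ∈ T, ∀ j ∈ T', |h j| ≤ |h i|) :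
    nrm h T' * Real.sqrt k ≤ ∑ i ∈ T, |h i| := by
  have hk' : (0 : ℝ) < k := by exact_mod_cast hk
  set s := ∑ i ∈ T, |h i| with hs
  have hs0 : 0 ≤ s := Finset.sum_nonneg fun _ _ => abs_nonneg _
  have hj : ∀ j ∈ T', (k * |h j|) ≤ s := by
    intro j hj
    have := Finset.card_nsmul_le_sum T (fun i => |h i|) (|h j|) (fun i hi => hd i hi j hj)
    simpa [hT] using this
  have hsum : nrm h T' ^ 2 * k ^ 2 ≤ k * s ^ 2 := by
    rw [nrm_sq, Finset.sum_mul]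
    calc ∑ j ∈ T', h j ^ 2 * (k : ℝ) ^ 2 ≤ ∑ j ∈ T', s ^ 2 := by
          refine Finset.sum_le_sum fun j hjm => ?_
          rw [← sq_abs (h j)]
          have := pow_le_pow_left₀ (by positivity) (hj j hjm) 2
          nlinarith
      _ = T'.card * s ^ 2 := by simp
      _ ≤ k * s ^ 2 := by gcongr
  refine abs_le_of_sq_le_sq' ?_ hs0 |>.2
  rw [mul_pow, Real.sq_sqrt hk'.le]
  have : k * (nrm h T' ^ 2 * k) ≤ k * s ^ 2 := by linarith
  exact le_of_mul_le_mul_left this hk'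

/-- There is a set `T` of at most `k` indices in `S` (the largest entries of `h`) such that every
subadditive set function `F` bounded by `c ‖h_U‖₂` on sets `U ⊆ S \ T` of size at most `k`
satisfies `F (S \ T) ≤ c ‖h_S‖₁ / √k`. The set `T` does not depend on `F`, which matters
because `F` is later chosen in terms of `T`. -/
lemma block_bound {N k : ℕ} (hk : 0 < k) (h : Fin N → ℝ) (S : Finset (Fin N)) :
    ∃ T ⊆ S, T.card ≤ k ∧ ∀ (F : Finset (Fin N) → ℝ) (c : ℝ), 0 ≤ c → F ∅ ≤ 0 →
      (∀ U V, Disjoint U V → F (U ∪ V) ≤ F U + F V) →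
      (∀ U ⊆ S \ T, U.card ≤ k → F U ≤ c * nrm h U) →
      F (S \ T) * Real.sqrt k ≤ c * ∑ i ∈ S, |h i| := by
  induction S using Finset.strongInduction with
  | H S ih =>
  have hsk := Real.sqrt_nonneg (k : ℝ)
  by_cases hS : S.card ≤ k
  · refine ⟨S, subset_rfl, hS, fun F c hc h0 _ _ => ?_⟩
    rw [Finset.sdiff_self]
    have : 0 ≤ c * ∑ i ∈ S, |h i| :=
      mul_nonneg hc (Finset.sum_nonneg fun _ _ => abs_nonneg _)
    nlinarith
  · obtain ⟨T, hTS, hTc, hT⟩ := exists_top h S k (by omega)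
    have hTne : T.Nonempty := by rw [← Finset.card_pos]; omega
    obtain ⟨T', hT'S, hT'c, hT'⟩ := ih (S \ T) (Finset.sdiff_ssubset hTS hTne)
    refine ⟨T, hTS, hTc.le, fun F c hc h0 hadd hF => ?_⟩
    have h1 := hT' F c hc h0 hadd fun U hU hUc => hF U (hU.trans Finset.sdiff_subset) hUc
    have h2 := hadd T' ((S \ T) \ T') Finset.disjoint_sdiff
    rw [Finset.union_sdiff_of_subset hT'S] at h2
    have h3 := hF T' hT'S hT'c
    have h4 := nrm_le_of_dominated hk h T T' hTc hT'c fun i hi j hj => hT i hi j (hT'S hj)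
    rw [← Finset.sum_sdiff hTS, mul_add]
    calc F (S \ T) * √k ≤ (c * nrm h T' + F ((S \ T) \ T')) * √k := by gcongr; linarith
      _ = c * (nrm h T' * √k) + F ((S \ T) \ T') * √k := by ring
      _ ≤ _ := by
        have := mul_le_mul_of_nonneg_left h4 hc
        linarith

/-! ### Near-orthogonality under RIP -/

lemma sparse_of_supp {N k : ℕ} (v : Fin N → ℝ) (U : Finset (Fin N)) (hU : U.card ≤ k)
    (hv : ∀ i, i ∉ U → v i = 0) : SparseVec k v := by
  refine le_trans (Finset.card_le_card fun i hi => ?_) hU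
  by_contra hn
  exact (Finset.mem_filter.mp hi).2 (hv i hn)

lemma restr_sum_sq {N : ℕ} (h : Fin N → ℝ) (U : Finset (Fin N)) :
    ∑ i, (restr h U i) ^ 2 = nrm h U ^ 2 := by
  rw [nrm_sq]
  simp [restr, ite_pow]

lemma comb_sum_sq {N : ℕ} (h : Fin N → ℝ) {U V : Finset (Fin N)} (hd : Disjoint U V) (s t : ℝ) :
    ∑ i, ((s • restr h U + t • restr h V) i) ^ 2
      = s ^ 2 * nrm h U ^ 2 + t ^ 2 * nrm h V ^ 2 := by
  rw [← restr_sum_sq, ← restr_sum_sq, Finset.mul_sum, Finset.mul_sum, ← Finset.sum_add_distrib]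
  refine Finset.sum_congr rfl fun i _ => ?_
  by_cases hU : i ∈ U
  · have := Finset.disjoint_left.mp hd hU
    simp [restr, hU, this, mul_pow]
  · by_cases hV : i ∈ V <;> simp [restr, hU, hV, mul_pow]

/-- Under RIP of order `2k`, images of disjointly supported `k`-sparse vectors are nearly
orthogonal: this is polarization applied to the two vectors scaled to equal length. Only the lower
bound on the inner product is needed, and the upper one follows by changing the sign of one vector. -/
lemma rip_inner {m N k : ℕ} (A : Matrix (Fin m) (Fin N) ℝ) (δ : ℝ)
    (hA : RIP (2 * k) δ A) (h : Fin N → ℝ) {U V : Finset (Fin N)} (hd : Disjoint U V)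
    (hU : U.card ≤ k) (hV : V.card ≤ k) :
    -(A.mulVec (restr h U) ⬝ᵥ A.mulVec (restr h V)) ≤ δ * nrm h U * nrm h V := by
  have hsp : ∀ s t : ℝ, SparseVec (2 * k) (s • restr h U + t • restr h V) := by
    intro s t
    refine sparse_of_supp _ (U ∪ V) ((Finset.card_union_le _ _).trans (by omega)) ?_
    intro i hi
    simp only [Finset.mem_union, not_or] at hi
    simp [restr, hi.1, hi.2]
  have key : ∀ s t : ℝ, -(4 * (s * t) * (A.mulVec (restr h U) ⬝ᵥ A.mulVec (restr h V)))
      ≤ 2 * δ * (s ^ 2 * nrm h U ^ 2 + t ^ 2 * nrm h V ^ 2) := by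
    intro s t
    have h1 := (hA _ (hsp s t)).1
    have h2 := (hA _ (hsp s (-t))).2
    rw [comb_sum_sq h hd, dot_self] at h1 h2
    simp only [Matrix.mulVec_add, Matrix.mulVec_smul, add_dotProduct, dotProduct_add,
      smul_dotProduct, dotProduct_smul, smul_eq_mul] at h1 h2
    rw [dotProduct_comm (A.mulVec (restr h V)) (A.mulVec (restr h U))] at h1 h2
    nlinarith
  have zero : ∀ W : Finset (Fin N), nrm h W = 0 → restr h W = 0 := by
    intro W hW
    have h1 := restr_sum_sq h W
    rw [hW, zero_pow two_ne_zero, Finset.sum_eq_zero_iff_of_nonneg fun _ _ => sq_nonneg _] at h1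
    funext i
    exact pow_eq_zero_iff two_ne_zero |>.mp (h1 i (Finset.mem_univ i))
  rcases (nrm_nonneg h U).eq_or_lt with hU0 | hU0
  · simp [zero U hU0.symm, ← hU0]
  rcases (nrm_nonneg h V).eq_or_lt with hV0 | hV0
  · simp [zero V hV0.symm, ← hV0]
  have := key (nrm h V) (nrm h U)
  have hp := mul_pos hU0 hV0
  refine le_of_mul_le_mul_left (a := nrm h U * nrm h V) ?_ hp
  nlinarith

/-! ### The cone condition and the error bound -/

/-- If `x` vanishes off `T` and `‖w‖₁ ≤ ‖x‖₁`, the error `w - x` has at least half of its `ℓ¹` mass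
on `T`. -/
lemma cone_bound {N : ℕ} (x w : Fin N → ℝ) (T : Finset (Fin N)) (hT : ∀ i, i ∉ T → x i = 0)
    (hle : ∑ i, |w i| ≤ ∑ i, |x i|) :
    ∑ i ∈ Tᶜ, |(w - x) i| ≤ ∑ i ∈ T, |(w - x) i| := by
  rw [← Finset.sum_add_sum_compl T, ← Finset.sum_add_sum_compl T (fun i => |x i|)] at hle
  have h1 : ∑ i ∈ Tᶜ, |x i| = 0 :=
    Finset.sum_eq_zero fun i hi => by simp [hT i (Finset.mem_compl.mp hi)]
  have h2 : ∑ i ∈ Tᶜ, |(w - x) i| = ∑ i ∈ Tᶜ, |w i| :=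
    Finset.sum_congr rfl fun i hi => by simp [hT i (Finset.mem_compl.mp hi)]
  have h3 : ∑ i ∈ T, |x i| ≤ ∑ i ∈ T, |w i| + ∑ i ∈ T, |(w - x) i| := by
    rw [← Finset.sum_add_distrib]
    refine Finset.sum_le_sum fun i _ => ?_
    have := abs_sub (w i) (w i - x i)
    simpa using this
  linarith

lemma l1_le {N k : ℕ} (h : Fin N → ℝ) (T : Finset (Fin N)) (hT : T.card ≤ k) :
    ∑ i ∈ T, |h i| ≤ nrm h T * Real.sqrt k := by
  refine abs_le_of_sq_le_sq' ?_ (mul_nonneg (nrm_nonneg _ _) (Real.sqrt_nonneg _)) |>.2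
  rw [mul_pow, nrm_sq, Real.sq_sqrt (Nat.cast_nonneg k), mul_comm]
  have h1 := sq_sum_le_card_mul_sum_sq (s := T) (f := fun i => |h i|)
  simp only [sq_abs] at h1
  refine h1.trans ?_
  have : 0 ≤ ∑ i ∈ T, h i ^ 2 := Finset.sum_nonneg fun _ _ => sq_nonneg _
  gcongr

/-- The main estimate: a vector `h` in the cone satisfies `(1 - (1 + √2) δ) ‖h‖ ≤ 2 √(1+δ) ‖A h‖`. -/
lemma cone_stability {m N k : ℕ} (hk : 0 < k) (A : Matrix (Fin m) (Fin N) ℝ) (δ : ℝ)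
    (hδ₀ : 0 < δ) (hδ₁ : 0 < 1 - (1 + Real.sqrt 2) * δ) (hA : RIP (2 * k) δ A)
    (h : Fin N → ℝ) (T₀ : Finset (Fin N)) (hT₀ : T₀.card ≤ k)
    (hcone : ∑ i ∈ T₀ᶜ, |h i| ≤ ∑ i ∈ T₀, |h i|) :
    (1 - (1 + Real.sqrt 2) * δ) * norm2 h ≤ 2 * Real.sqrt (1 + δ) * norm2 (A.mulVec h) := by
  obtain ⟨T₁, hT₁S, hT₁, hblock⟩ := block_bound hk h T₀ᶜ
  have hsk : 0 < Real.sqrt (k : ℝ) := Real.sqrt_pos.mpr (by exact_mod_cast hk)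
  have hl1 : ∑ i ∈ T₀ᶜ, |h i| ≤ nrm h T₀ * Real.sqrt k := hcone.trans (l1_le h T₀ hT₀)
  set R := T₀ᶜ \ T₁ with hR
  have hd01 : Disjoint T₀ T₁ :=
    Finset.disjoint_left.mpr fun i hi hi' => Finset.mem_compl.mp (hT₁S hi') hi
  have hd0 : ∀ U ⊆ R, Disjoint T₀ U := fun U hU =>
    Finset.disjoint_left.mpr fun i hi hi' =>
      Finset.mem_compl.mp (Finset.mem_sdiff.mp (hU hi')).1 hi
  have hd1 : ∀ U ⊆ R, Disjoint T₁ U := fun U hU =>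
    Finset.disjoint_left.mpr fun i hi hi' => (Finset.mem_sdiff.mp (hU hi')).2 hi
  have hdR : Disjoint (T₀ ∪ T₁) R :=
    Finset.disjoint_union_left.mpr ⟨hd0 R subset_rfl, hd1 R subset_rfl⟩
  have hall : (T₀ ∪ T₁) ∪ R = Finset.univ := by
    ext i
    simp only [hR, Finset.mem_union, Finset.mem_sdiff, Finset.mem_compl, Finset.mem_univ, iff_true]
    tauto
  have huniv : restr h Finset.univ = h := by funext i; simp [restr]
  have hn : norm2 h = nrm h Finset.univ := rfl
  set a := nrm h T₀ with ha
  set b := nrm h T₁ with hb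
  set H := nrm h (T₀ ∪ T₁) with hH
  have ha0 : 0 ≤ a := nrm_nonneg _ _
  have hb0 : 0 ≤ b := nrm_nonneg _ _
  have hH0 : 0 ≤ H := nrm_nonneg _ _
  have hHsq : H ^ 2 = a ^ 2 + b ^ 2 := nrm_sq_union h hd01
  have haH : a ≤ H := abs_le_of_sq_le_sq' (by nlinarith) hH0 |>.2
  have hab : a + b ≤ Real.sqrt 2 * H := by
    refine abs_le_of_sq_le_sq' ?_ (by positivity) |>.2
    rw [mul_pow, Real.sq_sqrt (by norm_num), hHsq]
    nlinarith [sq_nonneg (a - b)]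
  have hrest : nrm h R ≤ a := by
    have := hblock (nrm h) 1 zero_le_one (by simp [nrm]) (fun U V hd => nrm_union_le h hd)
      (fun U _ _ => by simp)
    refine le_of_mul_le_mul_right ?_ hsk
    linarith
  set u := A.mulVec (restr h (T₀ ∪ T₁)) with hu
  have hcross : -(u ⬝ᵥ A.mulVec (restr h R)) ≤ δ * (a + b) * a := by
    have := hblock (fun U => -(u ⬝ᵥ A.mulVec (restr h U))) (δ * (a + b)) (by positivity)
      (by
        have : restr h ∅ = 0 := by funext i; simp [restr]
        simp [this])
      (fun U V hd => by
        simp only [restr_union h hd, Matrix.mulVec_add, dotProduct_add]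
        linarith)
      (fun U hU hUc => by
        have e0 := rip_inner A δ hA h (hd0 U hU) hT₀ hUc
        have e1 := rip_inner A δ hA h (hd1 U hU) hT₁ hUc
        simp only [hu, restr_union h hd01, Matrix.mulVec_add, add_dotProduct]
        linarith)
    refine le_of_mul_le_mul_right ?_ hsk
    have h2 := mul_le_mul_of_nonneg_left hl1 (show 0 ≤ δ * (a + b) by positivity)
    linarith
  have hrip := hA (restr h (T₀ ∪ T₁)) (sparse_of_supp _ (T₀ ∪ T₁)
    ((Finset.card_union_le _ _).trans (by omega)) fun i hi => by simp [restr, hi])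
  rw [restr_sum_sq, ← hH, ← hu] at hrip
  have hunorm : norm2 u ≤ Real.sqrt (1 + δ) * H := by
    refine (Real.sqrt_le_sqrt hrip.2).trans_eq ?_
    rw [Real.sqrt_mul (by linarith), Real.sqrt_sq hH0]
  have hsplit : u ⬝ᵥ u = u ⬝ᵥ A.mulVec h - u ⬝ᵥ A.mulVec (restr h R) := by
    have : A.mulVec h = u + A.mulVec (restr h R) := by
      rw [hu, ← Matrix.mulVec_add, ← restr_union h hdR, hall, huniv]
    rw [this, dotProduct_add]
    ring
  have hB0 : 0 ≤ norm2 (A.mulVec h) := Real.sqrt_nonneg _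
  have hmain : (1 - δ) * H ^ 2 ≤
      Real.sqrt (1 + δ) * H * norm2 (A.mulVec h) + δ * (Real.sqrt 2 * H) * H := by
    have e1 := hrip.1
    rw [dot_self, hsplit] at e1
    have e2 := (dot_le u (A.mulVec h)).trans (mul_le_mul_of_nonneg_right hunorm hB0)
    have e3 : δ * (a + b) * a ≤ δ * (Real.sqrt 2 * H) * H := by gcongr
    linarith
  have hHle : (1 - (1 + Real.sqrt 2) * δ) * H ≤ Real.sqrt (1 + δ) * norm2 (A.mulVec h) := by
    rcases hH0.eq_or_lt with h0 | h0
    · rw [← h0, mul_zero]; positivity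
    · refine le_of_mul_le_mul_right ?_ h0
      nlinarith
  have hfin : norm2 h ≤ 2 * H := by
    rw [hn, ← hall]
    have := nrm_union_le h hdR
    linarith
  have := mul_le_mul_of_nonneg_left hfin hδ₁.le
  linarith

theorem stmt_8 {m N k : ℕ} (A : Matrix (Fin m) (Fin N) ℝ) (δ : ℝ)
    (hδ₀ : 0 < δ) (hδ₁ : δ < Real.sqrt 2 - 1) (hA : RIP (2 * k) δ A)
    (x : Fin N → ℝ) (hx : SparseVec k x)
    (ε : ℝ) (hε : 0 ≤ ε) (e : Fin m → ℝ) (he : norm2 e ≤ ε)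
    (y : Fin m → ℝ) (hy : y = A.mulVec x + e)
    (xhat : Fin N → ℝ)
    (hfeas : norm2 (A.mulVec xhat - y) ≤ ε)
    (hmin : ∀ z : Fin N → ℝ, norm2 (A.mulVec z - y) ≤ ε →
      (∑ i, |xhat i|) ≤ (∑ i, |z i|)) :
    norm2 (xhat - x) ≤ (4 * Real.sqrt (1 + δ) / (1 - (1 + Real.sqrt 2) * δ)) * ε := by
  have hpos : 0 < 1 - (1 + Real.sqrt 2) * δ := by
    have := Real.sq_sqrt (show (0 : ℝ) ≤ 2 by norm_num)
    -- `(1 + √2) (√2 - 1) = 1`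
    nlinarith [Real.sqrt_nonneg 2]
  have hxfeas : norm2 (A.mulVec x - y) ≤ ε := by
    refine le_trans (le_of_eq ?_) he
    simp [hy, norm2]
  set T₀ := Finset.univ.filter fun i => x i ≠ 0 with hT₀
  have hcone := cone_bound x xhat T₀ (fun i hi => by simpa [hT₀] using hi) (hmin x hxfeas)
  rcases Nat.eq_zero_or_pos k with hk | hk
  · -- For `k = 0` the support of `x` is empty and the cone condition forces `xhat - x = 0`.
    have hemp : T₀ = ∅ := Finset.card_eq_zero.mp (Nat.le_zero.mp (hk ▸ hx))
    rw [hemp, Finset.sum_empty, Finset.compl_empty] at hcone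
    have h0 := (Finset.sum_eq_zero_iff_of_nonneg fun _ _ => abs_nonneg _).mp
      (le_antisymm hcone (Finset.sum_nonneg fun _ _ => abs_nonneg _))
    have : norm2 (xhat - x) = 0 := by
      rw [norm2, Finset.sum_eq_zero, Real.sqrt_zero]
      intro i hi
      rw [abs_eq_zero.mp (h0 i hi), zero_pow two_ne_zero]
    rw [this]
    positivity
  · have hst := cone_stability hk A δ hδ₀ hpos hA (xhat - x) T₀ hx hcone
    have hAh : norm2 (A.mulVec (xhat - x)) ≤ 2 * ε := by
      have : A.mulVec (xhat - x) = (A.mulVec xhat - y) + e := by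
        rw [Matrix.mulVec_sub, hy]; abel
      rw [this]
      linarith [norm2_add_le (A.mulVec xhat - y) e]
    rw [div_mul_eq_mul_div, le_div_iff₀ hpos]
    have := mul_le_mul_of_nonneg_left hAh (show 0 ≤ 2 * Real.sqrt (1 + δ) by positivity)
    linarith
end

section
/- Let 𝒳 and 𝒵 be order-d tensors in ℝ^{N₁×⋯×N_d}, and for each j ∈ {1,…,d} let V_j ⊆ ℝ^{N_j} be a linear subspace every element of which is k-sparse, such that every mode-j fiber of 𝒳 and every mode-j fiber of 𝒵 lies in V_j. Let U_j ∈ ℝ^{m_j×N_j} satisfy the null space property of order k (NSP_k), with k ≤ N_j, for each j ∈ {1,…,d}. If 𝒳 ×₁ U₁ ×₂ U₂ ⋯ ×_d U_d = 𝒵 ×₁ U₁ ×₂ U₂ ⋯ ×_d U_d, then 𝒳 = 𝒵. -/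
/-!
The null space property of order `k` excludes nonzero `k`-sparse vectors from the kernel of `U j`:
if `S` is a `k`-element set containing the support of such a vector, the sum over `Sᶜ` vanishes.
Hence `U j` is injective on the subspace `V j`, and there is a matrix `L j` such that `L j * U j`
is the identity on `V j` (`exists_leftInverse_on`).

A mode product depends on its `j`-th matrix only through the action of that matrix on the mode-`j`
fibers (`modeProd_congr_at`), so replacing identity matrices by the `L j * U j` one mode at a time
gives `𝒳 = 𝒳 ×₁ L₁U₁ ⋯ ×_d L_dU_d`. Since mode products compose (`modeProd_modeProd`), `𝒳` is the
mode product of `𝒳 ×₁ U₁ ⋯ ×_d U_d` with the matrices `L j`, and is therefore determined by it.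
-/

open Matrix Finset

/-- The mode product `𝒳 ×₁ U₁ ×₂ U₂ ⋯ ×_d U_d` of an order-`d` tensor with matrices. -/
def modeProd {d : ℕ} {N m : Fin d → ℕ} (X : ((j : Fin d) → Fin (N j)) → ℝ)
    (U : (j : Fin d) → Matrix (Fin (m j)) (Fin (N j)) ℝ) :
    ((j : Fin d) → Fin (m j)) → ℝ :=
  fun p => ∑ i : (j : Fin d) → Fin (N j), X i * ∏ j, U j (p j) (i j)

/-- The mode-`j` fiber of a tensor obtained by fixing all indices except the `j`-th. -/
def fiber {d : ℕ} {N : Fin d → ℕ} (X : ((j : Fin d) → Fin (N j)) → ℝ)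
    (j : Fin d) (i : (l : Fin d) → Fin (N l)) : Fin (N j) → ℝ :=
  fun t => X (Function.update i j t)

lemma eq_zero_of_sparse_of_nsp {m N k : ℕ} (hk : k ≤ N) {A : Matrix (Fin m) (Fin N) ℝ}
    (hA : NSP k A) {v : Fin N → ℝ} (hv : SparseVec k v) (h0 : A.mulVec v = 0) : v = 0 := by
  by_contra hne
  obtain ⟨S, hTS, hS⟩ := Finset.exists_superset_card_eq hv (by simpa using hk)
  have hlt := hA v hne h0 S hS
  have hz : ∑ i ∈ Sᶜ, |v i| = 0 := by
    refine Finset.sum_eq_zero fun i hi => ?_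
    by_contra hvi
    exact Finset.mem_compl.1 hi (hTS (by simpa using hvi))
  have hnn : 0 ≤ ∑ i ∈ S, |v i| := Finset.sum_nonneg fun i _ => abs_nonneg _
  linarith

lemma exists_leftInverse_on {m N k : ℕ} (hk : k ≤ N) {A : Matrix (Fin m) (Fin N) ℝ}
    (hA : NSP k A) (V : Submodule ℝ (Fin N → ℝ)) (hV : ∀ v ∈ V, SparseVec k v) :
    ∃ L : Matrix (Fin N) (Fin m) ℝ, ∀ v ∈ V, (L * A).mulVec v = v := by
  have hker : LinearMap.ker (A.mulVecLin.comp V.subtype) = ⊥ := by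
    refine LinearMap.ker_eq_bot'.2 fun v hv => ?_
    exact Subtype.ext (eq_zero_of_sparse_of_nsp hk hA (hV v v.2) hv)
  obtain ⟨g, hg⟩ := LinearMap.exists_leftInverse_of_injective _ hker
  refine ⟨LinearMap.toMatrix' (V.subtype.comp g), fun v hv => ?_⟩
  have h1 := congrArg Subtype.val (LinearMap.congr_fun hg ⟨v, hv⟩)
  rw [← Matrix.mulVec_mulVec, LinearMap.toMatrix'_mulVec]
  exact h1

lemma modeProd_modeProd {d : ℕ} {N m n : Fin d → ℕ} (X : ((j : Fin d) → Fin (N j)) → ℝ)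
    (U : (j : Fin d) → Matrix (Fin (m j)) (Fin (N j)) ℝ)
    (L : (j : Fin d) → Matrix (Fin (n j)) (Fin (m j)) ℝ) :
    modeProd (modeProd X U) L = modeProd X fun j => L j * U j := by
  funext t
  simp only [modeProd, Finset.sum_mul, Matrix.mul_apply]
  rw [Finset.sum_comm]
  refine Finset.sum_congr rfl fun i _ => ?_
  rw [Fintype.prod_sum, Finset.mul_sum]
  refine Finset.sum_congr rfl fun p _ => ?_
  rw [Finset.prod_mul_distrib]
  ring

lemma modeProd_one {d : ℕ} {N : Fin d → ℕ} (X : ((j : Fin d) → Fin (N j)) → ℝ) :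
    modeProd X (fun j => (1 : Matrix (Fin (N j)) (Fin (N j)) ℝ)) = X := by
  funext t
  unfold modeProd
  rw [Finset.sum_eq_single t]
  · simp
  · intro i _ hi
    obtain ⟨j, hj⟩ := Function.ne_iff.1 hi
    exact mul_eq_zero_of_right _
      (Finset.prod_eq_zero (Finset.mem_univ j) (Matrix.one_apply_ne hj.symm))
  · simp

/-- Two families of matrices that differ only in mode `a`, and whose mode-`a` matrices agree on
the mode-`a` fibers of `X`, have the same mode product with `X`. -/
lemma modeProd_congr_at {d : ℕ} {N m : Fin d → ℕ} (X : ((j : Fin d) → Fin (N j)) → ℝ)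
    (M M' : (j : Fin d) → Matrix (Fin (m j)) (Fin (N j)) ℝ) (a : Fin d)
    (hne : ∀ j, j ≠ a → M j = M' j)
    (ha : ∀ i, (M a).mulVec (fiber X a i) = (M' a).mulVec (fiber X a i)) :
    modeProd X M = modeProd X M' := by
  funext t
  unfold modeProd
  -- Separate the `a`-th index from the others, and sum over it first.
  rw [← (Equiv.piSplitAt a fun j => Fin (N j)).symm.sum_comp,
    ← (Equiv.piSplitAt a fun j => Fin (N j)).symm.sum_comp,
    Fintype.sum_prod_type_right, Fintype.sum_prod_type_right]
  refine Finset.sum_congr rfl fun r _ => ?_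
  have key : ∀ Q : (j : Fin d) → Matrix (Fin (m j)) (Fin (N j)) ℝ, ∀ x₀ : Fin (N a),
      ∑ x, X ((Equiv.piSplitAt a fun j => Fin (N j)).symm (x, r)) *
        ∏ j, Q j (t j) ((Equiv.piSplitAt a fun j => Fin (N j)).symm (x, r) j) =
      (Q a).mulVec (fiber X a ((Equiv.piSplitAt a fun j => Fin (N j)).symm (x₀, r))) (t a) *
        ∏ j : {j // j ≠ a}, Q j (t j) (r j) := by
    intro Q x₀
    simp only [Matrix.mulVec, dotProduct, Finset.sum_mul]
    refine Finset.sum_congr rfl fun x _ => ?_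
    have hupd : Function.update ((Equiv.piSplitAt a fun j => Fin (N j)).symm (x₀, r)) a x =
        (Equiv.piSplitAt a fun j => Fin (N j)).symm (x, r) := by
      funext j
      by_cases hj : j = a
      · subst hj; simp [Equiv.piSplitAt]
      · simp [Equiv.piSplitAt, hj]
    have hprod : ∏ j, Q j (t j) ((Equiv.piSplitAt a fun j => Fin (N j)).symm (x, r) j) =
        Q a (t a) x * ∏ j : {j // j ≠ a}, Q j (t j) (r j) := by
      rw [Fintype.prod_eq_mul_prod_subtype_ne _ a]
      congr 1
      · simp [Equiv.piSplitAt]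
      · refine Finset.prod_congr rfl fun j _ => ?_
        simp [Equiv.piSplitAt, j.2]
    rw [fiber, hupd, hprod]
    ring
  rcases isEmpty_or_nonempty (Fin (N a)) with he | ⟨⟨x₀⟩⟩
  · simp
  · rw [key M x₀, key M' x₀, ha]
    congr 1
    exact Finset.prod_congr rfl fun j _ => by rw [hne j j.2]

lemma modeProd_eq_self {d : ℕ} {N : Fin d → ℕ} (X : ((j : Fin d) → Fin (N j)) → ℝ)
    (P : (j : Fin d) → Matrix (Fin (N j)) (Fin (N j)) ℝ)
    (hP : ∀ j i, (P j).mulVec (fiber X j i) = fiber X j i) : modeProd X P = X := by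
  -- Only the modes in `s` carry `P j`; the others carry the identity.
  have main : ∀ s : Finset (Fin d), modeProd X (fun j => if j ∈ s then P j else 1) = X := by
    intro s
    induction s using Finset.induction_on with
    | empty => simpa using modeProd_one X
    | insert a s has ih =>
      refine (modeProd_congr_at X _ _ a (fun j hj => ?_) fun i => ?_).trans ih
      · simp [hj]
      · simp [has, hP]
  simpa using main Finset.univ

theorem stmt_10 {d k : ℕ} {N m : Fin d → ℕ} (hk : ∀ j, k ≤ N j)
    (X Z : ((j : Fin d) → Fin (N j)) → ℝ)
    (V : (j : Fin d) → Submodule ℝ (Fin (N j) → ℝ))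
    (hV : ∀ j, ∀ v ∈ V j, SparseVec k v)
    (hXf : ∀ j i, fiber X j i ∈ V j) (hZf : ∀ j i, fiber Z j i ∈ V j)
    (U : (j : Fin d) → Matrix (Fin (m j)) (Fin (N j)) ℝ)
    (hU : ∀ j, NSP k (U j))
    (h : modeProd X U = modeProd Z U) : X = Z := by
  choose L hL using fun j => exists_leftInverse_on (hk j) (hU j) (V j) (hV j)
  calc X = modeProd X (fun j => L j * U j) :=
        (modeProd_eq_self X _ fun j i => hL j _ (hXf j i)).symm
    _ = modeProd Z (fun j => L j * U j) := by rw [← modeProd_modeProd, h, modeProd_modeProd]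
    _ = Z := modeProd_eq_self Z _ fun j i => hL j _ (hZf j i)
end

section
/- Let U_j ∈ ℝ^{m_j×N_j} satisfy the null space property of order k (NSP_k), with k ≤ N_j, for each j ∈ {1,…,d}. Then the measurement map 𝒳 ↦ 𝒳 ×₁ U₁ ×₂ U₂ ⋯ ×_d U_d is injective on the set of k-sparse order-d tensors: if 𝒳, 𝒵 ∈ ℝ^{N₁×⋯×N_d} are both k-sparse and their mode-product measurements coincide, then 𝒳 = 𝒵. -/
/-!
The null space property of order `k` makes each `U j` injective on vectors with at most `2k` nonzero
entries (`NSP.eq_zero_of_support`). The difference `W = X - Z` has at most `2k` nonzero entries, so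
its support projects in each mode `j` to a set `T j` of at most `2k` indices, and the columns of
`U j` indexed by `T j` are linearly independent. Hence, for an index `a` in the support of `W`,
there are functionals `v j` dual to the column `a j` among those columns (`NSP.exists_dual`).
Applying `⊗ⱼ v j` to the measurement of `W`, which is zero, returns exactly the entry `W a`, so
`W a = 0`.
-/

open Matrix Finset

/-- An order-`d` tensor is `k`-sparse if it has at most `k` nonzero entries in total. -/
def SparseTensor {d : ℕ} {N : Fin d → ℕ} (k : ℕ)
    (X : ((j : Fin d) → Fin (N j)) → ℝ) : Prop :=
  (Finset.univ.filter fun i => X i ≠ 0).card ≤ k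

theorem sum_abs_le_of_support {N : ℕ} {w : Fin N → ℝ} {P Q : Finset (Fin N)}
    (h : ∀ i ∈ P, w i ≠ 0 → i ∈ Q) : ∑ i ∈ P, |w i| ≤ ∑ i ∈ Q, |w i| := by
  rw [← Finset.sum_subset (Finset.inter_subset_left (s₁ := P) (s₂ := Q))]
  · exact Finset.sum_le_sum_of_subset_of_nonneg Finset.inter_subset_right
      fun i _ _ => abs_nonneg _
  · intro i hi hn
    by_contra h0
    exact hn (Finset.mem_inter.2 ⟨hi, h i hi fun h1 => h0 (by simp [h1])⟩)

/-- A kernel vector supported on `2k` indices vanishes: cover the support by two sets of size `k`;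
each would carry strictly less `ℓ¹` mass than its complement, hence than the other set. -/
theorem NSP.eq_zero_of_support {m N k : ℕ} {A : Matrix (Fin m) (Fin N) ℝ} (hA : NSP k A)
    (hk : k ≤ N) {T : Finset (Fin N)} (hT : T.card ≤ 2 * k) {w : Fin N → ℝ}
    (hw : ∀ i, w i ≠ 0 → i ∈ T) (hAw : A.mulVec w = 0) : w = 0 := by
  by_contra hne
  have hN : k ≤ Fintype.card (Fin N) := by simpa using hk
  obtain ⟨S₁, hS₁, hT₁⟩ : ∃ S : Finset (Fin N), S.card = k ∧ (T \ S).card ≤ k := by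
    rcases le_total T.card k with h | h
    · obtain ⟨S, hTS, hS⟩ := Finset.exists_superset_card_eq h hN
      exact ⟨S, hS, by simp [Finset.sdiff_eq_empty_iff_subset.2 hTS]⟩
    · obtain ⟨S, hST, hS⟩ := Finset.exists_subset_card_eq h
      refine ⟨S, hS, ?_⟩
      rw [Finset.card_sdiff_of_subset hST]
      omega
  obtain ⟨S₂, hTS₂, hS₂⟩ := Finset.exists_superset_card_eq hT₁ hN
  have h₁ := hA w hne hAw S₁ hS₁
  have h₂ := hA w hne hAw S₂ hS₂
  have h₃ : ∑ i ∈ S₁ᶜ, |w i| ≤ ∑ i ∈ S₂, |w i| := sum_abs_le_of_support fun i hi h0 =>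
    hTS₂ (Finset.mem_sdiff.2 ⟨hw i h0, Finset.mem_compl.1 hi⟩)
  have h₄ : ∑ i ∈ S₂ᶜ, |w i| ≤ ∑ i ∈ S₁, |w i| := sum_abs_le_of_support fun i hi h0 => by
    by_contra h1
    exact Finset.mem_compl.1 hi (hTS₂ (Finset.mem_sdiff.2 ⟨hw i h0, h1⟩))
  linarith

/-- Any at most `2k` columns of `A` are linearly independent, so each of them has a functional `v`
dual to it within the family. -/
theorem NSP.exists_dual {m N k : ℕ} {A : Matrix (Fin m) (Fin N) ℝ} (hA : NSP k A)
    (hk : k ≤ N) {T : Finset (Fin N)} (hT : T.card ≤ 2 * k) {a : Fin N} (ha : a ∈ T) :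
    ∃ v : Fin m → ℝ, ∀ b ∈ T, ∑ p, v p * A p b = if a = b then 1 else 0 := by
  let B : Matrix (Fin m) T ℝ := A.submatrix id Subtype.val
  have hker : LinearMap.ker (Matrix.toLin' B) = ⊥ := by
    rw [LinearMap.ker_eq_bot']
    intro x hx
    let w : Fin N → ℝ := fun i => if h : i ∈ T then x ⟨i, h⟩ else 0
    have hw : w = 0 := by
      refine hA.eq_zero_of_support hk hT (w := w) (fun i hi => ?_) ?_
      · by_contra h
        exact hi (by simp [w, h])
      · funext p
        have hp := congrFun hx p
        simp only [Matrix.toLin'_apply, Matrix.mulVec, dotProduct, B, Matrix.submatrix_apply,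
          id] at hp
        rw [← hp]
        simp only [Matrix.mulVec, dotProduct]
        rw [← Finset.sum_subset (Finset.subset_univ T) (fun i _ hi => by simp [w, hi]),
          ← Finset.sum_coe_sort T]
        exact Finset.sum_congr rfl fun i _ => by simp [w]
    funext i
    have := congrFun hw i
    simpa [w] using this
  obtain ⟨g, hg⟩ := LinearMap.exists_leftInverse_of_injective _ hker
  have hL : LinearMap.toMatrix' g * B = 1 := by
    rw [← LinearMap.toMatrix'_toLin' B, ← LinearMap.toMatrix'_comp, hg, LinearMap.toMatrix'_id]
  refine ⟨LinearMap.toMatrix' g ⟨a, ha⟩, fun b hb => ?_⟩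
  have := congrFun (congrFun hL ⟨a, ha⟩) ⟨b, hb⟩
  simpa [Matrix.mul_apply, Matrix.one_apply, B] using this

theorem stmt_11 {d k : ℕ} {N m : Fin d → ℕ} (hk : ∀ j, k ≤ N j)
    (U : (j : Fin d) → Matrix (Fin (m j)) (Fin (N j)) ℝ)
    (hU : ∀ j, NSP k (U j))
    (X Z : ((j : Fin d) → Fin (N j)) → ℝ)
    (hX : SparseTensor k X) (hZ : SparseTensor k Z)
    (h : modeProd X U = modeProd Z U) : X = Z := by
  classical
  by_contra hne
  obtain ⟨a, ha⟩ := Function.ne_iff.1 hne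
  let S := (Finset.univ.filter fun i => X i ≠ 0) ∪ Finset.univ.filter fun i => Z i ≠ 0
  have hS : S.card ≤ 2 * k := by
    have : S.card ≤ _ := Finset.card_union_le (Finset.univ.filter fun i => X i ≠ 0)
      (Finset.univ.filter fun i => Z i ≠ 0)
    unfold SparseTensor at hX hZ
    omega
  have hmem : ∀ i, X i - Z i ≠ 0 → i ∈ S := by
    intro i hi
    by_contra hn
    simp only [S, Finset.mem_union, Finset.mem_filter, Finset.mem_univ, true_and, not_or,
      not_not] at hn
    exact hi (by rw [hn.1, hn.2, sub_zero])
  have hdual : ∀ j, ∃ v : Fin (m j) → ℝ, ∀ b ∈ S.image (fun i => i j),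
      ∑ p, v p * U j p b = if a j = b then 1 else 0 := fun j =>
    (hU j).exists_dual (hk j) (Finset.card_image_le.trans hS)
      (Finset.mem_image_of_mem _ (hmem a (sub_ne_zero.2 ha)))
  choose v hv using hdual
  have hzero : ∀ p : (j : Fin d) → Fin (m j), ∑ i, (X i - Z i) * ∏ j, U j (p j) (i j) = 0 := by
    intro p
    have := congrFun h p
    simp only [modeProd] at this
    simp only [sub_mul, Finset.sum_sub_distrib, this, sub_self]
  -- Apply the functional `⊗ⱼ v j` to the vanishing measurement of `X - Z`.
  have hsum : ∑ i, (X i - Z i) * ∏ j, ∑ p, v j p * U j p (i j) = 0 := by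
    calc ∑ i, (X i - Z i) * ∏ j, ∑ p, v j p * U j p (i j)
        = ∑ i, ∑ p : (j : Fin d) → Fin (m j),
            (∏ j, v j (p j)) * ((X i - Z i) * ∏ j, U j (p j) (i j)) := by
          refine Finset.sum_congr rfl fun i _ => ?_
          rw [Fintype.prod_sum, Finset.mul_sum]
          refine Finset.sum_congr rfl fun p _ => ?_
          rw [Finset.prod_mul_distrib]
          ring
      _ = 0 := by
          rw [Finset.sum_comm]
          simp only [← Finset.mul_sum, hzero, mul_zero, Finset.sum_const_zero]
  rw [Finset.sum_eq_single a] at hsum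
  · rw [Finset.prod_eq_one, mul_one] at hsum
    · exact ha (sub_eq_zero.1 hsum)
    · intro j _
      rw [hv j _ (Finset.mem_image_of_mem _ (hmem a (sub_ne_zero.2 ha))), if_pos rfl]
  · intro i _ hia
    by_cases hi : X i - Z i = 0
    · rw [hi, zero_mul]
    · obtain ⟨j, hj⟩ := Function.ne_iff.1 hia
      rw [Finset.prod_eq_zero (Finset.mem_univ j), mul_zero]
      rw [hv j _ (Finset.mem_image_of_mem (fun i => i j) (hmem i hi)), if_neg (Ne.symm hj)]
  · exact fun hn => absurd (Finset.mem_univ a) hn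
end

section
/- Let 𝒳 ∈ ℝ^{N₁×⋯×N_d} be a k-sparse order-d tensor with d ≥ 1 and k ≥ 1. Then there exist K ≤ k^{d−1} and vectors a_i^{(j)} ∈ R_j(𝒳) for i ∈ {1,…,K}, j ∈ {1,…,d}, such that 𝒳 = Σ_{i=1}^K a_i^{(1)} ∘ ⋯ ∘ a_i^{(d)}. -/
/-!
Each span `R_j(X)` has dimension at most `k`, since it is spanned by the mode-`j` fibers through
the at most `k` nonzero entries of `X` (`finrank_fiberSpan_le`). Every mode-`m` fiber can therefore
be expanded in a basis of `R_m(X)` with at most `k` elements, the coefficients being functionals of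
the fiber. Contracting a tensor with such a functional in mode `m` removes the dependence on the
`m`-th coordinate and turns the fibers in any other mode `l` into linear combinations of mode-`l`
fibers, so they stay in `R_l(X)`. Doing this in all modes but one
(`exists_partial_expansion`) produces at most `k ^ (d - 1)` terms, each a product of basis vectors
in `d - 1` modes and a cofactor depending on the last coordinate only, which is an element of the
remaining fiber span.
-/

open Matrix Finset

/-- `R_j(𝒳)`: the span of the mode-`j` fibers of `𝒳`. -/
def fiberSpan {d : ℕ} {N : Fin d → ℕ} (j : Fin d)
    (X : ((j : Fin d) → Fin (N j)) → ℝ) : Submodule ℝ (Fin (N j) → ℝ) :=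
  Submodule.span ℝ (Set.range (fiber X j))

/-- Every nonzero mode-`j` fiber passes through a nonzero entry, so the fibers through the support
of `X` already span `R_j(X)`. -/
lemma finrank_fiberSpan_le {d k : ℕ} {N : Fin d → ℕ} (X : ((j : Fin d) → Fin (N j)) → ℝ)
    (hX : SparseTensor k X) (j : Fin d) : Module.finrank ℝ (fiberSpan j X) ≤ k := by
  classical
  set T : Finset (Fin (N j) → ℝ) := (Finset.univ.filter fun i => X i ≠ 0).image (fiber X j)
  have hle : fiberSpan j X ≤ Submodule.span ℝ (T : Set (Fin (N j) → ℝ)) := by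
    refine Submodule.span_le.2 ?_
    rintro _ ⟨i, rfl⟩
    by_cases h : fiber X j i = 0
    · rw [h]
      exact Submodule.zero_mem _
    · obtain ⟨t, ht⟩ := Function.ne_iff.1 h
      refine Submodule.subset_span (Finset.mem_coe.2 (Finset.mem_image.2
        ⟨Function.update i j t, by simpa [fiber] using ht, ?_⟩))
      funext s
      simp [fiber]
  calc Module.finrank ℝ (fiberSpan j X)
      ≤ Module.finrank ℝ (Submodule.span ℝ (T : Set (Fin (N j) → ℝ))) :=
        Submodule.finrank_mono hle
    _ ≤ T.card := finrank_span_finset_le_card T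
    _ ≤ (Finset.univ.filter fun i => X i ≠ 0).card := Finset.card_image_le
    _ ≤ k := hX

/-- A basis `u` of a subspace `R`, together with dual functionals `φ` extended to the whole space
along a complement of `R`. -/
lemma exists_basis_dual {n : ℕ} (R : Submodule ℝ (Fin n → ℝ)) :
    ∃ (u : Fin (Module.finrank ℝ R) → Fin n → ℝ)
      (φ : Fin (Module.finrank ℝ R) → (Fin n → ℝ) →ₗ[ℝ] ℝ),
      (∀ b, u b ∈ R) ∧ ∀ x ∈ R, x = ∑ b, φ b x • u b := by
  obtain ⟨g, hg⟩ := R.subtype.exists_leftInverse_of_injective R.ker_subtype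
  let B := Module.finBasis ℝ R
  refine ⟨fun b => B b, fun b => B.coord b ∘ₗ g, fun b => (B b).2, fun x hx => ?_⟩
  have hgx : g x = ⟨x, hx⟩ := LinearMap.congr_fun hg ⟨x, hx⟩
  have h := congrArg R.subtype (B.sum_repr ⟨x, hx⟩)
  simp only [map_sum, map_smul, Submodule.subtype_apply] at h
  simp only [LinearMap.comp_apply, hgx, Module.Basis.coord_apply]
  exact h.symm

/-- The expansion of `X` in the modes belonging to `S` only: the cofactor `Y α` no longer depends
on the coordinates in `S`, and in every remaining mode its fibers still lie in the fiber span
of `X`. -/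
lemma exists_partial_expansion {d k : ℕ} {N : Fin d → ℕ} (X : ((j : Fin d) → Fin (N j)) → ℝ)
    (hX : SparseTensor k X) (S : Finset (Fin d)) :
    ∃ (ι : Type) (_ : Fintype ι), Fintype.card ι ≤ k ^ S.card ∧
      ∃ (a : ι → (j : Fin d) → Fin (N j) → ℝ) (Y : ι → ((j : Fin d) → Fin (N j)) → ℝ),
        (∀ α j, a α j ∈ fiberSpan j X) ∧
        (∀ α, ∀ l ∉ S, ∀ i, fiber (Y α) l i ∈ fiberSpan l X) ∧
        (∀ α i i', (∀ j ∉ S, i j = i' j) → Y α i = Y α i') ∧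
        ∀ i, X i = ∑ α, (∏ j ∈ S, a α j (i j)) * Y α i := by
  classical
  induction S using Finset.induction_on with
  | empty =>
    refine ⟨Unit, inferInstance, by simp, fun _ _ => 0, fun _ => X,
      fun _ _ => Submodule.zero_mem _, fun _ l _ i => Submodule.subset_span ⟨i, rfl⟩,
      fun _ i i' h => congrArg X (funext fun j => h j (by simp)), by simp⟩
  | insert m S hm ih =>
    obtain ⟨ι, _, hcard, a, Y, ha, hY, hYi, hXY⟩ := ih
    obtain ⟨u, φ, hu, hφ⟩ := exists_basis_dual (fiberSpan m X)
    refine ⟨ι × Fin (Module.finrank ℝ (fiberSpan m X)), inferInstance, ?_,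
      fun p => Function.update (a p.1) m (u p.2), fun p i => φ p.2 (fiber (Y p.1) m i),
      ?_, ?_, ?_, ?_⟩
    · rw [Fintype.card_prod, Fintype.card_fin, Finset.card_insert_of_notMem hm, pow_succ]
      exact Nat.mul_le_mul hcard (finrank_fiberSpan_le X hX m)
    · rintro ⟨α, b⟩ j
      by_cases hj : j = m
      · subst hj
        simpa using hu b
      · simpa [hj] using ha α j
    · rintro ⟨α, b⟩ l hl i
      obtain ⟨hlm, hlS⟩ : l ≠ m ∧ l ∉ S := by simpa using hl
      -- Fibers in mode `l` of the contraction are combinations of mode-`l` fibers of `Y α`.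
      have h : fiber (fun i => φ b (fiber (Y α) m i)) l i =
          ∑ s, φ b (Pi.single s 1) • fiber (Y α) l (Function.update i m s) := by
        funext t
        simp only [fiber, Finset.sum_apply, Pi.smul_apply]
        rw [LinearMap.pi_apply_eq_sum_univ (φ b)]
        refine Finset.sum_congr rfl fun s _ => ?_
        have hs : (fun x => if s = x then (1 : ℝ) else 0) = Pi.single s 1 := by
          funext x
          simp [Pi.single_apply, eq_comm]
        rw [hs, smul_eq_mul, smul_eq_mul, mul_comm, Function.update_comm hlm.symm]
        rfl
      rw [h]
      exact Submodule.sum_mem _ fun s _ => Submodule.smul_mem _ _ (hY α l hlS _)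
    · rintro ⟨α, b⟩ i i' h
      refine congrArg (φ b) (funext fun t => hYi α _ _ fun j hj => ?_)
      by_cases hjm : j = m
      · subst hjm
        simp
      · simpa [hjm] using h j (by simp [hjm, hj])
    · intro i
      rw [hXY i, Fintype.sum_prod_type]
      refine Finset.sum_congr rfl fun α _ => ?_
      have h := congrFun (hφ _ (hY α m hm i)) (i m)
      simp only [fiber, Function.update_eq_self, Finset.sum_apply, Pi.smul_apply,
        smul_eq_mul] at h
      rw [h, Finset.mul_sum]
      refine Finset.sum_congr rfl fun b _ => ?_
      have hp : ∏ j ∈ S, Function.update (a α) m (u b) j (i j) = ∏ j ∈ S, a α j (i j) :=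
        Finset.prod_congr rfl fun j hj => by
          rw [Function.update_of_ne (ne_of_mem_of_not_mem hj hm)]
      rw [Finset.prod_insert hm, hp]
      simp only [Function.update_self]
      ring

theorem stmt_15 {d k : ℕ} (hd : 1 ≤ d) (hk : 1 ≤ k) {N : Fin d → ℕ}
    (X : ((j : Fin d) → Fin (N j)) → ℝ) (hX : SparseTensor k X) :
    ∃ K : ℕ, K ≤ k ^ (d - 1) ∧
      ∃ a : Fin K → (j : Fin d) → Fin (N j) → ℝ,
        (∀ i j, a i j ∈ fiberSpan j X) ∧
        X = fun idx => ∑ i, ∏ j, a i j (idx j) := by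
  classical
  let j₀ : Fin d := ⟨0, hd⟩
  obtain ⟨ι, _, hcard, a, Y, ha, hY, hYi, hXY⟩ :=
    exists_partial_expansion X hX (Finset.univ.erase j₀)
  have hc : (Finset.univ.erase j₀).card = d - 1 := by simp
  rw [hc] at hcard
  -- If some `N j` is zero, there are no multi-indices and the empty sum represents `X`.
  rcases isEmpty_or_nonempty ((j : Fin d) → Fin (N j)) with hE | ⟨⟨i₀⟩⟩
  · exact ⟨0, Nat.zero_le _, fun i => i.elim0, fun i => i.elim0, funext fun i => hE.elim i⟩
  refine ⟨Fintype.card ι, hcard, fun c => Function.update (a ((Fintype.equivFin ι).symm c)) j₀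
    (fiber (Y ((Fintype.equivFin ι).symm c)) j₀ i₀), ?_, ?_⟩
  · intro c j
    by_cases hj : j = j₀
    · rw [hj]
      simp only [Function.update_self]
      exact hY _ j₀ (by simp) i₀
    · simp only [Function.update_of_ne hj]
      exact ha _ j
  · funext i
    rw [hXY i, ← (Fintype.equivFin ι).symm.sum_comp]
    refine Finset.sum_congr rfl fun c _ => ?_
    rw [← Finset.prod_erase_mul _ _ (Finset.mem_univ j₀)]
    simp only [Function.update_self]
    congr 1
    · refine Finset.prod_congr rfl fun j hj => ?_
      rw [Function.update_of_ne (Finset.ne_of_mem_erase hj)]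
    -- The cofactor depends on the coordinate `j₀` alone, so it is its fiber through `i₀`.
    · refine hYi _ _ _ fun j hj => ?_
      obtain rfl : j = j₀ := by simpa using hj
      simp
end

section
/- (First stage of GTCS-S.) Let 𝒳 ∈ ℝ^{N₁×⋯×N_d} be a k-sparse order-d tensor, let U_j ∈ ℝ^{m_j×N_j} for j ∈ {1,…,d} with U₁ satisfying the null space property of order k (NSP_k) and k ≤ N₁, and set 𝒴 = 𝒳 ×₁ U₁ ×₂ U₂ ⋯ ×_d U_d and 𝒵 = 𝒳 ×₂ U₂ ⋯ ×_d U_d ∈ ℝ^{N₁×m₂×⋯×m_d}. Then for every multi-index (p₂,…,p_d), the corresponding mode-1 fiber z of 𝒵 is k-sparse and is the unique minimizer of ‖z'‖₁ over all z' ∈ ℝ^{N₁} with U₁z' equal to the mode-1 fiber of 𝒴 at (p₂,…,p_d). -/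
/-!
Measuring modes other than the first acts on each mode-1 slice `X (i₁, ·)` separately, so a
mode-1 fiber of `Z` vanishes at `i₁` as soon as the whole slice does: its support lies in the
image of the support of `X` under projection to the first index, hence has at most `k` elements
(`sparseVec_of_support_fst`).  The fiber of `Y` is `U₁` applied to the fiber of `Z`, so the rest
is the classical fact that the null space property makes every `k`-sparse vector the unique
`ℓ¹`-minimizer among the solutions with the same measurements (`NSP.l1_lt`).
-/

open Matrix Finset

/-- Recovery from the null space property.  Choose `S` of size exactly `k` containing the support
of `x`; with `w = z - x`, the triangle inequality on `S` gives
`‖z‖₁ ≥ ‖x‖₁ - ‖w_S‖₁ + ‖w_{Sᶜ}‖₁ > ‖x‖₁`. -/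
theorem NSP.l1_lt {m N k : ℕ} (hk : k ≤ N) {A : Matrix (Fin m) (Fin N) ℝ} (hA : NSP k A)
    {x z : Fin N → ℝ} (hx : SparseVec k x) (hz : A.mulVec z = A.mulVec x) (hne : z ≠ x) :
    ∑ i, |x i| < ∑ i, |z i| := by
  obtain ⟨S, hS, hSk⟩ := Finset.exists_superset_card_eq hx (by simpa using hk)
  have hlt := hA (z - x) (sub_ne_zero.mpr hne) (by rw [Matrix.mulVec_sub, hz, sub_self]) S hSk
  have hxS : ∀ i ∈ Sᶜ, x i = 0 := by
    intro i hi
    by_contra h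
    exact Finset.mem_compl.mp hi (hS (by simpa using h))
  have h1 : ∑ i ∈ Sᶜ, |x i| = 0 := Finset.sum_eq_zero fun i hi => by simp [hxS i hi]
  have h2 : ∑ i ∈ Sᶜ, |(z - x) i| = ∑ i ∈ Sᶜ, |z i| :=
    Finset.sum_congr rfl fun i hi => by simp [hxS i hi]
  have h3 : ∑ i ∈ S, |x i| ≤ ∑ i ∈ S, |z i| + ∑ i ∈ S, |(z - x) i| := by
    rw [← Finset.sum_add_distrib]
    refine Finset.sum_le_sum fun i _ => ?_
    have h := abs_sub (z i) (z i - x i)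
    rwa [sub_sub_cancel] at h
  rw [← Finset.sum_add_sum_compl S fun i => |x i|, ← Finset.sum_add_sum_compl S fun i => |z i|]
  linarith

/-- A vector supported on the first indices of the nonzero entries of a `k`-sparse array is
`k`-sparse. -/
theorem sparseVec_of_support_fst {N k : ℕ} {β : Type*} [Fintype β] {X : Fin N × β → ℝ}
    (hX : (Finset.univ.filter fun i => X i ≠ 0).card ≤ k) {z : Fin N → ℝ}
    (hz : ∀ i, (∀ q, X (i, q) = 0) → z i = 0) : SparseVec k z := by
  classical
  refine le_trans (Finset.card_le_card fun i hi => ?_)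
    ((Finset.card_image_le (f := Prod.fst)).trans hX)
  have hzi : z i ≠ 0 := by simpa using hi
  obtain ⟨q, hq⟩ := not_forall.mp (mt (hz i) hzi)
  exact Finset.mem_image.mpr ⟨(i, q), by simpa using hq, rfl⟩

/-- First stage of GTCS-S: an order-`(d+1)` tensor `𝒳` is encoded with its first mode
explicit, as a function on `Fin N₁ × ((j : Fin d) → Fin (Ns j))`, where modes `2,…,d+1`
are given by the function part.  `𝒵 = 𝒳 ×₂ U₂ ⋯ ×_{d+1} U_{d+1}` leaves mode 1 untouched,
and `𝒴 = 𝒳 ×₁ U₁ ×₂ U₂ ⋯ ×_{d+1} U_{d+1}` is obtained by further measuring mode 1 with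
`U₁`.  Every mode-1 fiber of `𝒵` is `k`-sparse and is the unique `ℓ¹`-minimizer subject to
`U₁ z' = ` (the corresponding mode-1 fiber of `𝒴`). -/
theorem stmt_16 {d k N₁ m₁ : ℕ} {Ns ms : Fin d → ℕ} (hk : k ≤ N₁)
    (X : Fin N₁ × ((j : Fin d) → Fin (Ns j)) → ℝ)
    (hX : (Finset.univ.filter fun i => X i ≠ 0).card ≤ k)
    (U₁ : Matrix (Fin m₁) (Fin N₁) ℝ) (hU₁ : NSP k U₁)
    (U : (j : Fin d) → Matrix (Fin (ms j)) (Fin (Ns j)) ℝ)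
    (Z : Fin N₁ × ((j : Fin d) → Fin (ms j)) → ℝ)
    (hZ : ∀ i₁ p, Z (i₁, p) =
      ∑ q : (j : Fin d) → Fin (Ns j), X (i₁, q) * ∏ j, U j (p j) (q j))
    (Y : Fin m₁ × ((j : Fin d) → Fin (ms j)) → ℝ)
    (hY : ∀ p₁ p, Y (p₁, p) = ∑ i₁, U₁ p₁ i₁ * Z (i₁, p)) :
    ∀ p : (j : Fin d) → Fin (ms j),
      SparseVec k (fun i₁ => Z (i₁, p)) ∧
      IsUniqueMin U₁ (fun p₁ => Y (p₁, p)) (fun i₁ => Z (i₁, p)) := by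
  intro p
  have hsp : SparseVec k fun i₁ => Z (i₁, p) := sparseVec_of_support_fst hX fun i₁ h => by
    simp [hZ, h]
  have hYZ : U₁.mulVec (fun i₁ => Z (i₁, p)) = fun p₁ => Y (p₁, p) := by
    ext p₁
    simp [hY, Matrix.mulVec, dotProduct]
  refine ⟨hsp, hYZ, fun z hz => ?_⟩
  have hlt := fun hne => hU₁.l1_lt hk hsp (hz.trans hYZ.symm) hne
  refine ⟨?_, fun heq => by_contra fun hne => (hlt hne).ne' heq⟩
  by_cases hne : z = fun i₁ => Z (i₁, p)
  · rw [hne]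
  · exact (hlt hne).le
end
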